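/- arXiv:1703.07666 — 3 statements merged into one kernel-verified Lean document; each statement's English description precedes it below -/
import Mathlib

section
/- Uniform marginals lemma (simple version): There exists N such that for every n ≥ N the following holds with m = n^256. Let X ⊆ [m]^n be nonempty and 0.9-dense, and let Y ⊆ ({0,1}^m)^n be nonempty with deficiency nm − log₂|Y| ≤ n³. Then for every z ∈ {0,1}^n the set G^{-1}(z) ∩ (X × Y) is nonempty, and the uniform distribution on G^{-1}(z) ∩ (X × Y) has both of its marginal distributions (on the first and second coordinate, respectively) 1/n²-close in total variation distance to the uniform distribution on X and to the uniform distribution on Y. -/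
open Finset

/-!
Give the elements of `X` weights `σ x ∈ [-1, 1]` and consider the function
`y ↦ ∑ x ∈ X, σ x * (2 ^ n * 1[G (x, y) = z] - 1)` on the cube `{0,1}^(nm)`. Its Walsh coefficient
at a set `T` of positions comes only from the `x` that read every position of `T`, and it vanishes
at `∅`. Density of `X` makes such `x` rare, so the Walsh coefficients remain square-summably small
even after weighting them by `(2r - 1) ^ |T|`, which is the cost of bounding the `2r`-th moment by
hypercontractivity (Bonami's inequality). Since `Y` occupies at least a `2 ^ (-r)` fraction of the
cube for `r = n³`, restricting that moment to `Y` loses a factor `2 ^ r`, hence only a constant in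
the `L^(2r)` norm. Taking `σ = 1` controls the marginal on `Y`, and taking for `σ` the signs of the
row sums controls the marginal on `X`.
-/

namespace IndexGadget

lemma choose_two_mul_le (r j : ℕ) :
    (2 * r).choose (2 * j) ≤ (2 * r - 1) ^ j * r.choose j := by
  induction j with
  | zero => simp
  | succ j ih =>
    obtain hrj | hjr := le_or_gt r j
    · simp [Nat.choose_eq_zero_of_lt (show 2 * r < 2 * (j + 1) by lia)]
    refine Nat.le_of_mul_le_mul_right ?_ (show 0 < (2 * j + 1) * (2 * j + 2) by positivity)
    calc (2 * r).choose (2 * (j + 1)) * ((2 * j + 1) * (2 * j + 2))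
        = (2 * r).choose (2 * j) * ((2 * r - 2 * j) * (2 * r - (2 * j + 1))) := by
          have h₁ := Nat.choose_succ_right_eq (2 * r) (2 * j)
          have h₂ : (2 * r).choose (2 * (j + 1)) * (2 * j + 2) =
              (2 * r).choose (2 * j + 1) * (2 * r - (2 * j + 1)) :=
            Nat.choose_succ_right_eq _ _
          rw [← mul_assoc _ (2 * r - _), ← h₁, mul_right_comm, ← h₂]
          ring
      _ ≤ (2 * r - 1) ^ j * r.choose j * (2 * (r - j) * ((2 * r - 1) * (2 * j + 1))) := by
          gcongr
          · lia
          · exact (show 2 * r - (2 * j + 1) ≤ 2 * r - 1 by lia).trans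
              (Nat.le_mul_of_pos_right _ (by positivity))
      _ = (2 * r - 1) ^ (j + 1) * (r.choose j * (r - j)) * (2 * (2 * j + 1)) := by ring
      _ = (2 * r - 1) ^ (j + 1) * r.choose (j + 1) * ((2 * j + 1) * (2 * j + 2)) := by
          rw [← Nat.choose_succ_right_eq]
          ring

lemma sum_range_one_add_neg_one_pow_mul (f : ℕ → ℝ) (r : ℕ) :
    ∑ k ∈ range (2 * r + 1), (1 + (-1) ^ k) * f k = 2 * ∑ j ∈ range (r + 1), f (2 * j) := by
  induction r with
  | zero => norm_num
  | succ r ih =>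
    rw [mul_add_one, sum_range_succ, sum_range_succ, ih, sum_range_succ _ (r + 1),
      (odd_two_mul_add_one r).neg_one_pow,
      (show Even (2 * r + 1 + 1) by simp [Nat.even_add_one]).neg_one_pow]
    ring_nf

lemma add_pow_add_sub_pow (r : ℕ) (a b : ℝ) :
    (a + b) ^ (2 * r) + (a - b) ^ (2 * r) =
      2 * ∑ j ∈ range (r + 1), (2 * r).choose (2 * j) * (a ^ 2) ^ (r - j) * (b ^ 2) ^ j := by
  calc (a + b) ^ (2 * r) + (a - b) ^ (2 * r)
      = ∑ k ∈ range (2 * r + 1),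
          (1 + (-1) ^ k) * ((2 * r).choose k * a ^ (2 * r - k) * b ^ k) := by
        rw [add_comm a b, show a - b = -b + a by ring, add_pow, add_pow, ← sum_add_distrib]
        refine sum_congr rfl fun k _ => ?_
        rw [neg_pow]
        ring
    _ = _ := by
        rw [sum_range_one_add_neg_one_pow_mul]
        simp only [← pow_mul, Nat.mul_sub]

lemma add_pow_add_sub_pow_le (r : ℕ) (a b : ℝ) :
    (a + b) ^ (2 * r) + (a - b) ^ (2 * r) ≤ 2 * (a ^ 2 + (2 * r - 1 : ℕ) * b ^ 2) ^ r := by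
  rw [add_pow_add_sub_pow, add_comm (a ^ 2), add_pow]
  refine mul_le_mul_of_nonneg_left (sum_le_sum fun j _ => ?_) zero_le_two
  calc ((2 * r).choose (2 * j) : ℝ) * (a ^ 2) ^ (r - j) * (b ^ 2) ^ j
      ≤ ((2 * r - 1) ^ j * r.choose j : ℕ) * (a ^ 2) ^ (r - j) * (b ^ 2) ^ j := by
        gcongr
        exact choose_two_mul_le r j
    _ = ((2 * r - 1 : ℕ) * b ^ 2) ^ j * (a ^ 2) ^ (r - j) * r.choose j := by
        push_cast
        ring

lemma sum_add_pow_le {Ω : Type*} (s : Finset Ω) {r : ℕ} (hr : r ≠ 0) {f g : Ω → ℝ}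
    (hf : ∀ w ∈ s, 0 ≤ f w) (hg : ∀ w ∈ s, 0 ≤ g w) {A B C : ℝ} (hA : 0 ≤ A) (hB : 0 ≤ B)
    (hC : 0 ≤ C) (hfA : ∑ w ∈ s, f w ^ r ≤ C * A ^ r) (hgB : ∑ w ∈ s, g w ^ r ≤ C * B ^ r) :
    ∑ w ∈ s, (f w + g w) ^ r ≤ C * (A + B) ^ r := by
  have rpow_le {S D : ℝ} (hS : 0 ≤ S) (hD : 0 ≤ D) (h : S ≤ C * D ^ r) :
      S ^ (1 / r : ℝ) ≤ C ^ (1 / r : ℝ) * D := by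
    calc S ^ (1 / r : ℝ) ≤ (C * D ^ r) ^ (1 / r : ℝ) := by gcongr
      _ = C ^ (1 / r : ℝ) * D := by
        rw [Real.mul_rpow hC (by positivity), one_div, Real.pow_rpow_inv_natCast hD hr]
  have minkowski := Real.Lp_add_le_of_nonneg (p := r) s
    (by exact_mod_cast Nat.one_le_iff_ne_zero.2 hr) hf hg
  simp only [Real.rpow_natCast] at minkowski
  have hf₀ : 0 ≤ ∑ w ∈ s, f w ^ r := sum_nonneg fun w hw => pow_nonneg (hf w hw) r
  have hg₀ : 0 ≤ ∑ w ∈ s, g w ^ r := sum_nonneg fun w hw => pow_nonneg (hg w hw) r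
  have hfg₀ : 0 ≤ ∑ w ∈ s, (f w + g w) ^ r :=
    sum_nonneg fun w hw => pow_nonneg (add_nonneg (hf w hw) (hg w hw)) r
  calc ∑ w ∈ s, (f w + g w) ^ r
      = ((∑ w ∈ s, (f w + g w) ^ r) ^ (1 / r : ℝ)) ^ r := by
        rw [one_div, Real.rpow_inv_natCast_pow hfg₀ hr]
    _ ≤ (C ^ (1 / r : ℝ) * (A + B)) ^ r := by
        gcongr
        linarith [rpow_le hf₀ hA hfA, rpow_le hg₀ hB hgB]
    _ = C * (A + B) ^ r := by
        rw [mul_pow, one_div, Real.rpow_inv_natCast_pow hC hr]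

lemma sum_abs_le_card_mul_of_sum_pow_le {Ω : Type*} {s : Finset Ω} {F : Ω → ℝ} {r : ℕ}
    (hr : r ≠ 0) {C : ℝ} (hC : 0 ≤ C) (h : ∑ w ∈ s, F w ^ (2 * r) ≤ #s * C ^ (2 * r)) :
    ∑ w ∈ s, |F w| ≤ #s * C := by
  obtain ⟨k, hk⟩ : ∃ k, 2 * r = k + 1 := ⟨2 * r - 1, by lia⟩
  obtain rfl | hs := s.eq_empty_or_nonempty
  · simp
  have hs₀ : (0 : ℝ) < #s := by exact_mod_cast hs.card_pos
  have power_mean := pow_sum_div_card_le_sum_pow (s := s) (f := fun w => |F w|)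
    (fun w _ => abs_nonneg (F w)) k
  simp only [← hk, (even_two_mul r).pow_abs] at power_mean
  rw [div_le_iff₀' (pow_pos hs₀ k)] at power_mean
  refine (pow_le_pow_iff_left₀ (by positivity) (by positivity) (by lia : 2 * r ≠ 0)).1 ?_
  calc (∑ w ∈ s, |F w|) ^ (2 * r) ≤ #s ^ k * (#s * C ^ (2 * r)) := by
        exact power_mean.trans (by gcongr)
    _ = (#s * C) ^ (2 * r) := by
        rw [mul_pow, hk]
        ring

lemma sum_powerset_erase_empty_pow_card {V : Type*} [DecidableEq V] (s : Finset V) (q : ℝ) :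
    ∑ T ∈ s.powerset.erase ∅, q ^ #T = (1 + q) ^ #s - 1 := by
  rw [sum_erase_eq_sub (empty_mem_powerset s)]
  simp [← prod_const, ← prod_one_add]

lemma one_add_pow_sub_one_le {n : ℕ} {q : ℝ} (hq : 0 ≤ q) (h : n * q ≤ 1) :
    (1 + q) ^ n - 1 ≤ 2 * (n * q) := by
  have hnq : 0 ≤ n * q := by positivity
  calc (1 + q) ^ n - 1 ≤ Real.exp (n * q) - 1 := by
        rw [Real.exp_nat_mul]
        gcongr
        linarith [Real.add_one_le_exp q]
    _ ≤ |Real.exp (n * q) - 1| := le_abs_self _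
    _ ≤ 2 * |n * q| := Real.abs_exp_sub_one_le (by rwa [abs_of_nonneg hnq])
    _ = 2 * (n * q) := by rw [abs_of_nonneg hnq]

/-- The `±1` encoding of a bit. -/
def boolSign (b : Bool) : ℝ := if b then -1 else 1

lemma boolSign_sq (b : Bool) : boolSign b ^ 2 = 1 := by cases b <;> simp [boolSign]

lemma abs_boolSign (b : Bool) : |boolSign b| = 1 := by cases b <;> simp [boolSign]

lemma boolSign_not (b : Bool) : boolSign (!b) = -boolSign b := by cases b <;> simp [boolSign]

lemma one_add_boolSign_mul_boolSign (a b : Bool) :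
    1 + boolSign a * boolSign b = if b = a then 2 else 0 := by
  cases a <;> cases b <;> norm_num [boolSign]

section Walsh

variable {V : Type*}

/-- The Walsh character `w ↦ ∏ v ∈ T, (-1) ^ w v` of the cube `V → Bool`. -/
def walsh (T : Finset V) (w : V → Bool) : ℝ := ∏ v ∈ T, boolSign (w v)

lemma abs_walsh (T : Finset V) (w : V → Bool) : |walsh T w| = 1 := by
  simp [walsh, abs_prod, abs_boolSign]

variable [DecidableEq V]

lemma walsh_insert {a : V} {T : Finset V} (ha : a ∉ T) (w : V → Bool) :
    walsh (insert a T) w = boolSign (w a) * walsh T w :=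
  prod_insert ha

lemma sum_powerset_insert_mul_walsh {a : V} {A : Finset V} (ha : a ∉ A) (c : Finset V → ℝ)
    (w : V → Bool) :
    ∑ T ∈ (insert a A).powerset, c T * walsh T w =
      ∑ T ∈ A.powerset, c T * walsh T w +
        boolSign (w a) * ∑ T ∈ A.powerset, c (insert a T) * walsh T w := by
  rw [sum_powerset_insert ha, mul_sum]
  congr! 2 with T hT
  rw [walsh_insert (notMem_mono (mem_powerset.1 hT) ha)]
  ring

lemma sum_powerset_insert_pow_card_mul {a : V} {A : Finset V} (ha : a ∉ A) (K : ℝ)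
    (c : Finset V → ℝ) :
    ∑ T ∈ (insert a A).powerset, K ^ #T * c T =
      ∑ T ∈ A.powerset, K ^ #T * c T + K * ∑ T ∈ A.powerset, K ^ #T * c (insert a T) := by
  rw [sum_powerset_insert ha, mul_sum]
  congr! 2 with T hT
  rw [card_insert_of_notMem (notMem_mono (mem_powerset.1 hT) ha)]
  ring

/-- The permutation of the cube `V → Bool` that negates the coordinate `a`. -/
def flipAt (a : V) : Equiv.Perm (V → Bool) :=
  Function.Involutive.toPerm (fun w => Function.update w a (!w a)) fun w => by simp

lemma flipAt_apply (a : V) (w : V → Bool) : flipAt a w = Function.update w a (!w a) := rfl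

lemma boolSign_flipAt (a : V) (w : V → Bool) : boolSign (flipAt a w a) = -boolSign (w a) := by
  simp [flipAt_apply, boolSign_not]

lemma walsh_flipAt {a : V} {T : Finset V} (ha : a ∉ T) (w : V → Bool) :
    walsh T (flipAt a w) = walsh T w :=
  prod_congr rfl fun v hv => by simp [flipAt_apply, ne_of_mem_of_not_mem hv ha]

lemma sum_mul_walsh_flipAt {a : V} {A : Finset V} (ha : a ∉ A) (c : Finset V → ℝ)
    (w : V → Bool) :
    ∑ T ∈ A.powerset, c T * walsh T (flipAt a w) = ∑ T ∈ A.powerset, c T * walsh T w :=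
  sum_congr rfl fun _ hT => by rw [walsh_flipAt (notMem_mono (mem_powerset.1 hT) ha)]

variable [Fintype V]

lemma sum_add_boolSign_mul_pow_le (r : ℕ) (a : V) {f g : (V → Bool) → ℝ}
    (hf : ∀ w, f (flipAt a w) = f w) (hg : ∀ w, g (flipAt a w) = g w) :
    ∑ w, (f w + boolSign (w a) * g w) ^ (2 * r) ≤
      ∑ w, (f w ^ 2 + (2 * r - 1 : ℕ) * g w ^ 2) ^ r := by
  have flip_sum : ∑ w, (f w + boolSign (w a) * g w) ^ (2 * r) =
      ∑ w, (f w - boolSign (w a) * g w) ^ (2 * r) := by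
    rw [← Equiv.sum_comp (flipAt a)]
    simp only [hf, hg, boolSign_flipAt, neg_mul, sub_eq_add_neg]
  have two_point (w : V → Bool) := add_pow_add_sub_pow_le r (f w) (boolSign (w a) * g w)
  simp only [mul_pow (boolSign _), boolSign_sq, one_mul] at two_point
  have := sum_le_sum fun w (_ : w ∈ univ) => two_point w
  rw [sum_add_distrib, ← flip_sum, ← mul_sum] at this
  linarith

-- Induct on `A`: the two-point inequality handles the new coordinate, and Minkowski's inequality in
-- `L^r` adds up the contributions of the sets avoiding it and of the sets containing it.
theorem bonami {r : ℕ} (hr : r ≠ 0) (A : Finset V) (c : Finset V → ℝ) :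
    ∑ w, (∑ T ∈ A.powerset, c T * walsh T w) ^ (2 * r) ≤
      2 ^ Fintype.card V * (∑ T ∈ A.powerset, (2 * r - 1 : ℕ) ^ #T * c T ^ 2) ^ r := by
  induction A using Finset.induction_on generalizing c with
  | empty => simp [walsh, pow_mul]
  | insert a A ha ih =>
    set K : ℝ := ((2 * r - 1 : ℕ) : ℝ)
    simp only [sum_powerset_insert_mul_walsh ha, sum_powerset_insert_pow_card_mul ha]
    refine (sum_add_boolSign_mul_pow_le r a (sum_mul_walsh_flipAt ha c)
      (sum_mul_walsh_flipAt ha fun T => c (insert a T))).trans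
      (sum_add_pow_le univ hr (fun _ _ => by positivity) (fun _ _ => by positivity)
        (by positivity) (by positivity) (by positivity) ?_ ?_)
    · simpa only [pow_mul] using ih c
    · set g : (V → Bool) → ℝ := fun w => ∑ T ∈ A.powerset, c (insert a T) * walsh T w
      set G : ℝ := ∑ T ∈ A.powerset, K ^ #T * c (insert a T) ^ 2
      calc ∑ w, (K * g w ^ 2) ^ r = K ^ r * ∑ w, g w ^ (2 * r) := by
            simp only [mul_pow, mul_sum, pow_mul]
        _ ≤ K ^ r * (2 ^ Fintype.card V * G ^ r) := by
            gcongr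
            exact ih fun T => c (insert a T)
        _ = 2 ^ Fintype.card V * (K * G) ^ r := by ring

end Walsh

section TotalVariation

lemma sum_abs_sum_le_of_forall_abs_le_one {α β : Type*} {s : Finset α} {t : Finset β}
    {F : α → β → ℝ} {C : ℝ}
    (h : ∀ σ : α → ℝ, (∀ a, |σ a| ≤ 1) → ∑ b ∈ t, |∑ a ∈ s, σ a * F a b| ≤ C) :
    ∑ a ∈ s, |∑ b ∈ t, F a b| ≤ C := by
  set σ : α → ℝ := fun a => (SignType.sign (∑ b ∈ t, F a b) : ℝ)
  calc ∑ a ∈ s, |∑ b ∈ t, F a b| = ∑ b ∈ t, ∑ a ∈ s, σ a * F a b := by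
        rw [sum_comm]
        simp only [← mul_sum, σ, sign_mul_self]
    _ ≤ ∑ b ∈ t, |∑ a ∈ s, σ a * F a b| := sum_le_sum fun _ _ => le_abs_self _
    _ ≤ C := h σ fun a => by cases h : SignType.sign (∑ b ∈ t, F a b) <;> simp [σ, h]

lemma abs_div_sub_one_div_le {a b c M N : ℝ} (hb : 0 < b) (hc : 0 ≤ c) (hM : 0 < M) (hN : 0 < N) :
    |c / N - 1 / M| ≤ |a * c - b| / (M * b) + c * (|a * N - M * b| / (N * (M * b))) := by
  calc |c / N - 1 / M| = |(a * c - b) / (M * b) - c * ((a * N - M * b) / (N * (M * b)))| := by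
        congr 1
        field_simp
        ring
    _ ≤ _ := abs_sub _ _
    _ = _ := by
        rw [abs_div, abs_mul c, abs_div, abs_of_pos (mul_pos hM hb),
          abs_of_pos (mul_pos hN (mul_pos hM hb)), abs_of_nonneg hc]

variable {α γ : Type*} [DecidableEq α]

lemma nonempty_and_sum_abs_card_fiber_div_sub_le {P : Finset γ} {f : γ → α} {X : Finset α}
    (hf : Set.MapsTo f P X) (hX : X.Nonempty) {a b ε : ℝ} (hb : 0 < b) (hε : ε < 1)
    (h : ∑ x ∈ X, |a * #{p ∈ P | f p = x} - b| ≤ ε * #X * b) :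
    P.Nonempty ∧ ∑ x ∈ X, |(#{p ∈ P | f p = x} : ℝ) / #P - 1 / #X| ≤ 2 * ε := by
  have hX₀ : (0 : ℝ) < #X := by exact_mod_cast hX.card_pos
  have card_P : ∑ x ∈ X, (#{p ∈ P | f p = x} : ℝ) = #P := by
    exact_mod_cast (card_eq_sum_card_fiberwise hf).symm
  have card_P_near : |a * #P - #X * b| ≤ ε * #X * b := by
    calc |a * #P - #X * b| = |∑ x ∈ X, (a * #{p ∈ P | f p = x} - b)| := by
          rw [sum_sub_distrib, ← mul_sum, card_P, sum_const, nsmul_eq_mul]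
      _ ≤ _ := (abs_sum_le_sum_abs _ _).trans h
  have hP : P.Nonempty := by
    by_contra hP
    rw [not_nonempty_iff_eq_empty.1 hP, card_empty, Nat.cast_zero, mul_zero, zero_sub, abs_neg,
      abs_of_pos (mul_pos hX₀ hb), mul_assoc] at card_P_near
    exact hε.not_ge ((le_mul_iff_one_le_left (mul_pos hX₀ hb)).1 card_P_near)
  have hP₀ : (0 : ℝ) < #P := by exact_mod_cast hP.card_pos
  refine ⟨hP, (sum_le_sum fun x _ =>
    abs_div_sub_one_div_le (a := a) hb (Nat.cast_nonneg _) hX₀ hP₀).trans ?_⟩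
  rw [sum_add_distrib, ← sum_div, ← sum_mul, card_P]
  calc (∑ x ∈ X, |a * #{p ∈ P | f p = x} - b|) / (#X * b) +
        #P * (|a * #P - #X * b| / (#P * (#X * b)))
      ≤ ε * #X * b / (#X * b) + #P * (ε * #X * b / (#P * (#X * b))) := by gcongr
    _ = 2 * ε := by
        field_simp
        ring

variable [Fintype α]

/-- The total variation distance between the law of `f p`, for `p` uniform on `P`, and the uniform
distribution on `X`, as half of the `ℓ¹` distance of the probability mass functions. -/
noncomputable def tvUniformMap (P : Finset γ) (f : γ → α) (X : Finset α) : ℝ :=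
  1 / 2 * ∑ x, |(#{p ∈ P | f p = x} : ℝ) / #P - if x ∈ X then 1 / (#X : ℝ) else 0|

lemma nonempty_and_tvUniformMap_le {P : Finset γ} {f : γ → α} {X : Finset α}
    (hf : Set.MapsTo f P X) (hX : X.Nonempty) {a b ε : ℝ} (hb : 0 < b) (hε : ε < 1)
    (h : ∑ x ∈ X, |a * #{p ∈ P | f p = x} - b| ≤ ε * #X * b) :
    P.Nonempty ∧ tvUniformMap P f X ≤ ε := by
  obtain ⟨hP, hsum⟩ := nonempty_and_sum_abs_card_fiber_div_sub_le hf hX hb hε h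
  have supported : ∑ x, |(#{p ∈ P | f p = x} : ℝ) / #P - if x ∈ X then 1 / (#X : ℝ) else 0| =
      ∑ x ∈ X, |(#{p ∈ P | f p = x} : ℝ) / #P - 1 / #X| := by
    symm
    refine sum_subset_zero_on_sdiff (subset_univ X) (fun x hx => ?_) fun x hx => by rw [if_pos hx]
    have hxX : x ∉ X := (mem_sdiff.1 hx).2
    have hfiber : #{p ∈ P | f p = x} = 0 :=
      card_eq_zero.2 (filter_eq_empty_iff.2 fun p hp hpx => hxX (hpx ▸ hf hp))
    simp [hfiber, hxX]
  exact ⟨hP, by rw [tvUniformMap, supported]; linarith⟩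

end TotalVariation

section Gadget

variable {ι κ : Type*}

/-- `X` is `δ`-dense: every block of coordinates of a uniform member of `X` has min-entropy rate at
least `δ`. -/
def IsDense [Fintype κ] [DecidableEq κ] (δ : ℝ) (X : Finset (ι → κ)) : Prop :=
  ∀ I : Finset ι, I.Nonempty → ∀ α : ι → κ,
    (#{x ∈ X | ∀ i ∈ I, x i = α i} : ℝ) ≤ #X * (Fintype.card κ : ℝ) ^ (-(δ * #I))

variable [Fintype ι]

/-- The slice `G⁻¹(z) ∩ (X × Y)`. -/
def gadgetFiber (X : Finset (ι → κ)) (Y : Finset (ι → κ → Bool)) (z : ι → Bool) :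
    Finset ((ι → κ) × (ι → κ → Bool)) :=
  {p ∈ X ×ˢ Y | ∀ i, p.2 i (p.1 i) = z i}

/-- The fluctuation at `(x, y)` of the indicator of `G⁻¹(z)`, normalized by its mean `2⁻ⁿ` over a
uniformly random `y`. -/
def bias (x : ι → κ) (y : ι → κ → Bool) (z : ι → Bool) : ℝ :=
  (if ∀ i, y i (x i) = z i then 2 ^ Fintype.card ι else 0) - 1

lemma sum_bias_right [DecidableEq κ] {X : Finset (ι → κ)} {x : ι → κ} (hx : x ∈ X)
    (Y : Finset (ι → κ → Bool)) (z : ι → Bool) :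
    ∑ y ∈ Y, bias x y z = 2 ^ Fintype.card ι * #{p ∈ gadgetFiber X Y z | p.1 = x} - #Y := by
  have fiber_eq : {p ∈ gadgetFiber X Y z | p.1 = x} = {x} ×ˢ {y ∈ Y | ∀ i, y i (x i) = z i} := by
    ext ⟨x', y⟩
    simp only [gadgetFiber, mem_filter, mem_product, mem_singleton]
    constructor
    · rintro ⟨⟨⟨-, hy⟩, hz⟩, rfl⟩
      exact ⟨rfl, hy, hz⟩
    · rintro ⟨rfl, hy, hz⟩
      exact ⟨⟨⟨hx, hy⟩, hz⟩, rfl⟩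
  rw [fiber_eq, card_product, card_singleton, one_mul]
  simp [bias, ← sum_filter, mul_comm]

lemma sum_bias_left [Fintype κ] (X : Finset (ι → κ)) {Y : Finset (ι → κ → Bool)} {y : ι → κ → Bool}
    (hy : y ∈ Y) (z : ι → Bool) :
    ∑ x ∈ X, bias x y z = 2 ^ Fintype.card ι * #{p ∈ gadgetFiber X Y z | p.2 = y} - #X := by
  have fiber_eq : {p ∈ gadgetFiber X Y z | p.2 = y} = {x ∈ X | ∀ i, y i (x i) = z i} ×ˢ {y} := by
    ext ⟨x, y'⟩
    simp only [gadgetFiber, mem_filter, mem_product, mem_singleton]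
    constructor
    · rintro ⟨⟨⟨hx, -⟩, hz⟩, rfl⟩
      exact ⟨⟨hx, hz⟩, rfl⟩
    · rintro ⟨⟨hx, hz⟩, rfl⟩
      exact ⟨⟨⟨hx, hy⟩, hz⟩, rfl⟩
  rw [fiber_eq, card_product, card_singleton, mul_one]
  simp [bias, ← sum_filter, mul_comm]

/-- The graph of `x`, that is, the set of positions of `y` that the gadget reads on input `x`. -/
def graph (x : ι → κ) : Finset (ι × κ) :=
  univ.map ⟨fun i => (i, x i), .of_comp (f := Prod.fst) Function.injective_id⟩

lemma mem_graph {x : ι → κ} {v : ι × κ} : v ∈ graph x ↔ x v.1 = v.2 := by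
  simp [graph, Prod.ext_iff]

lemma card_graph (x : ι → κ) : #(graph x) = Fintype.card ι := card_map _

variable [DecidableEq ι] [DecidableEq κ]

/-- The family of the graphs of the members of `X` is `p`-spread: a set of `k` positions lies in at
most a `p ^ k` fraction of them. -/
def IsSpread (p : ℝ) (X : Finset (ι → κ)) : Prop :=
  ∀ T : Finset (ι × κ), (#{x ∈ X | T ⊆ graph x} : ℝ) ≤ #X * p ^ #T

lemma IsDense.isSpread [Fintype κ] {δ : ℝ} {X : Finset (ι → κ)} (hX : IsDense δ X) :
    IsSpread ((Fintype.card κ : ℝ) ^ (-δ)) X := by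
  intro T
  obtain hT | ⟨α, hα⟩ := {x ∈ X | T ⊆ graph x}.eq_empty_or_nonempty
  · rw [hT, card_empty, Nat.cast_zero]
    positivity
  obtain rfl | hTne := T.eq_empty_or_nonempty
  · simp
  have hTα : ∀ v ∈ T, α v.1 = v.2 := fun v hv => mem_graph.1 ((mem_filter.1 hα).2 hv)
  have card_image : #(T.image Prod.fst) = #T :=
    card_image_of_injOn fun v hv w hw hvw => Prod.ext hvw (by rw [← hTα v hv, ← hTα w hw, hvw])
  have subset_graph_iff (x : ι → κ) : T ⊆ graph x ↔ ∀ i ∈ T.image Prod.fst, x i = α i := by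
    simp only [subset_iff, mem_graph, forall_mem_image]
    exact forall₂_congr fun v hv => by rw [hTα v hv]
  calc (#{x ∈ X | T ⊆ graph x} : ℝ)
      = #{x ∈ X | ∀ i ∈ T.image Prod.fst, x i = α i} := by
        rw [filter_congr fun x _ => subset_graph_iff x]
    _ ≤ #X * (Fintype.card κ : ℝ) ^ (-(δ * #(T.image Prod.fst))) := by
        convert hX _ (hTne.image _) α
    _ = #X * ((Fintype.card κ : ℝ) ^ (-δ)) ^ #T := by
        rw [card_image, ← neg_mul, Real.rpow_mul_natCast (Nat.cast_nonneg _)]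

lemma bias_eq_sum_walsh (x : ι → κ) (y : ι → κ → Bool) (z : ι → Bool) :
    bias x y z = ∑ T ∈ (graph x).powerset.erase ∅,
      walsh T (fun v => z v.1) * walsh T (fun v => y v.1 v.2) := by
  have expansion : ∑ T ∈ (graph x).powerset,
      walsh T (fun v => z v.1) * walsh T (fun v => y v.1 v.2) =
        if ∀ i, y i (x i) = z i then 2 ^ Fintype.card ι else 0 := by
    simp only [walsh, ← prod_mul_distrib]
    rw [← prod_one_add]
    simp [graph, one_add_boolSign_mul_boolSign, prod_ite_zero]
  rw [bias, ← expansion, ← sum_erase_add _ _ (empty_mem_powerset (graph x))]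
  simp [walsh]

/-- The Walsh coefficient at `T` of `y ↦ ∑ x ∈ X, σ x * bias x y z`. -/
noncomputable def biasCoeff (X : Finset (ι → κ)) (σ : (ι → κ) → ℝ) (z : ι → Bool)
    (T : Finset (ι × κ)) : ℝ :=
  ∑ x ∈ X with T ∈ (graph x).powerset.erase ∅, σ x * walsh T (fun v => z v.1)

lemma abs_biasCoeff_le (X : Finset (ι → κ)) {σ : (ι → κ) → ℝ} (hσ : ∀ x, |σ x| ≤ 1)
    (z : ι → Bool) (T : Finset (ι × κ)) :
    |biasCoeff X σ z T| ≤ #{x ∈ X | T ∈ (graph x).powerset.erase ∅} := by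
  calc |biasCoeff X σ z T|
      ≤ ∑ x ∈ X with T ∈ (graph x).powerset.erase ∅, |σ x * walsh T (fun v => z v.1)| :=
        abs_sum_le_sum_abs _ _
    _ ≤ ∑ x ∈ X with T ∈ (graph x).powerset.erase ∅, 1 := by
        gcongr with x
        rw [abs_mul, abs_walsh, mul_one]
        exact hσ x
    _ = _ := by simp

variable [Fintype κ]

lemma sum_mul_bias_eq_sum_biasCoeff (X : Finset (ι → κ)) (σ : (ι → κ) → ℝ)
    (y : ι → κ → Bool) (z : ι → Bool) :
    ∑ x ∈ X, σ x * bias x y z = ∑ T, biasCoeff X σ z T * walsh T (fun v => y v.1 v.2) := by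
  simp only [bias_eq_sum_walsh, biasCoeff, mul_sum, sum_mul, mul_assoc]
  exact sum_comm' (by simp)

-- The squared coefficient is bounded by the product of the two estimates of the number of `x`
-- reading `T`: spreadness for one factor, double counting over `x` for the other.
lemma sum_pow_card_mul_biasCoeff_sq_le {X : Finset (ι → κ)} {p : ℝ} (hX : IsSpread p X)
    (hp : 0 ≤ p) {K : ℝ} (hK : 0 ≤ K) {σ : (ι → κ) → ℝ} (hσ : ∀ x, |σ x| ≤ 1)
    (z : ι → Bool) :
    ∑ T, K ^ #T * biasCoeff X σ z T ^ 2 ≤ #X ^ 2 * ((1 + K * p) ^ Fintype.card ι - 1) := by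
  have sq_le (T : Finset (ι × κ)) : biasCoeff X σ z T ^ 2 ≤
      #X * p ^ #T * #{x ∈ X | T ∈ (graph x).powerset.erase ∅} := by
    have abs_le := abs_biasCoeff_le X hσ z T
    have count_le : (#{x ∈ X | T ∈ (graph x).powerset.erase ∅} : ℝ) ≤ #X * p ^ #T := by
      refine le_trans ?_ (hX T)
      gcongr with x
      simp
    rw [← sq_abs, sq]
    gcongr
    exact abs_le.trans count_le
  calc ∑ T, K ^ #T * biasCoeff X σ z T ^ 2
      ≤ ∑ T, K ^ #T * (#X * p ^ #T * #{x ∈ X | T ∈ (graph x).powerset.erase ∅}) := by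
        gcongr with T
        exact sq_le T
    _ = ∑ T, ∑ x ∈ X with T ∈ (graph x).powerset.erase ∅, #X * (K * p) ^ #T := by
        refine sum_congr rfl fun T _ => ?_
        rw [sum_const, nsmul_eq_mul]
        ring
    _ = ∑ x ∈ X, ∑ T ∈ (graph x).powerset.erase ∅, #X * (K * p) ^ #T :=
        sum_comm' (by simp [and_comm])
    _ = #X ^ 2 * ((1 + K * p) ^ Fintype.card ι - 1) := by
        simp only [← mul_sum, sum_powerset_erase_empty_pow_card, card_graph, sum_const,
          nsmul_eq_mul]
        ring

lemma sum_pow_sum_mul_bias_le {X : Finset (ι → κ)} {p : ℝ} (hX : IsSpread p X)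
    (hp : 0 ≤ p) {r : ℕ} (hr : r ≠ 0) {σ : (ι → κ) → ℝ} (hσ : ∀ x, |σ x| ≤ 1)
    (z : ι → Bool) :
    ∑ y, (∑ x ∈ X, σ x * bias x y z) ^ (2 * r) ≤
      2 ^ (Fintype.card ι * Fintype.card κ) *
        (#X ^ 2 * ((1 + (2 * r - 1 : ℕ) * p) ^ Fintype.card ι - 1)) ^ r := by
  have hyper := bonami hr univ (biasCoeff X σ z)
  simp only [powerset_univ, Fintype.card_prod] at hyper
  calc ∑ y, (∑ x ∈ X, σ x * bias x y z) ^ (2 * r)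
      = ∑ w, (∑ T, biasCoeff X σ z T * walsh T w) ^ (2 * r) := by
        simp only [sum_mul_bias_eq_sum_biasCoeff]
        exact ((Equiv.curry ι κ Bool).sum_comp _).symm
    _ ≤ _ := hyper
    _ ≤ _ := by
        gcongr
        exact sum_pow_card_mul_biasCoeff_sq_le hX hp (Nat.cast_nonneg _) hσ z

lemma sum_abs_sum_mul_bias_le {X : Finset (ι → κ)} {p : ℝ} (hX : IsSpread p X)
    (hp : 0 ≤ p) {Y : Finset (ι → κ → Bool)} {r : ℕ} (hr : r ≠ 0)
    (hY : (2 : ℝ) ^ (Fintype.card ι * Fintype.card κ) ≤ 2 ^ r * #Y) {ε : ℝ} (hε₀ : 0 ≤ ε)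
    (hε₁ : ε ≤ 1) (hpε : 8 * Fintype.card ι * r * p ≤ ε ^ 2) {σ : (ι → κ) → ℝ}
    (hσ : ∀ x, |σ x| ≤ 1) (z : ι → Bool) :
    ∑ y ∈ Y, |∑ x ∈ X, σ x * bias x y z| ≤ #Y * (ε * #X) := by
  set q : ℝ := (2 * r - 1 : ℕ) * p
  set W : ℝ := (1 + q) ^ Fintype.card ι - 1
  have hq : q ≤ 2 * r * p :=
    mul_le_mul_of_nonneg_right (by exact_mod_cast Nat.sub_le (2 * r) 1) hp
  have hq₀ : 0 ≤ q := by positivity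
  have hnq : 4 * (Fintype.card ι * q) ≤ ε ^ 2 :=
    calc 4 * (Fintype.card ι * q) ≤ 4 * (Fintype.card ι * (2 * r * p)) := by gcongr
      _ ≤ ε ^ 2 := by linarith
  have hW₀ : 0 ≤ W := sub_nonneg.2 (one_le_pow₀ (by linarith))
  have hW : 2 * W ≤ ε ^ 2 := by
    have := one_add_pow_sub_one_le hq₀ (by nlinarith : Fintype.card ι * q ≤ 1)
    linarith
  refine sum_abs_le_card_mul_of_sum_pow_le hr (by positivity) ?_
  calc ∑ y ∈ Y, (∑ x ∈ X, σ x * bias x y z) ^ (2 * r)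
      ≤ ∑ y, (∑ x ∈ X, σ x * bias x y z) ^ (2 * r) :=
        sum_le_univ_sum_of_nonneg fun y => (even_two_mul r).pow_nonneg _
    _ ≤ 2 ^ (Fintype.card ι * Fintype.card κ) * (#X ^ 2 * W) ^ r :=
        sum_pow_sum_mul_bias_le hX hp hr hσ z
    _ ≤ 2 ^ r * #Y * (#X ^ 2 * W) ^ r := by gcongr
    _ = #Y * (#X ^ 2 * (2 * W)) ^ r := by
        rw [mul_left_comm _ 2, mul_pow 2]
        ring
    _ ≤ #Y * (#X ^ 2 * ε ^ 2) ^ r := by gcongr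
    _ = #Y * (ε * #X) ^ (2 * r) := by rw [← mul_pow, ← pow_mul, mul_comm ε]

theorem uniform_marginals_of_isSpread {X : Finset (ι → κ)} (hX : X.Nonempty) {p : ℝ}
    (hXp : IsSpread p X) (hp : 0 ≤ p) {Y : Finset (ι → κ → Bool)} {r : ℕ} (hr : r ≠ 0)
    (hY : (2 : ℝ) ^ (Fintype.card ι * Fintype.card κ) ≤ 2 ^ r * #Y) {ε : ℝ} (hε₀ : 0 ≤ ε)
    (hε₁ : ε < 1) (hpε : 8 * Fintype.card ι * r * p ≤ ε ^ 2) (z : ι → Bool) :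
    (gadgetFiber X Y z).Nonempty ∧
      tvUniformMap (gadgetFiber X Y z) Prod.fst X ≤ ε ∧
      tvUniformMap (gadgetFiber X Y z) Prod.snd Y ≤ ε := by
  have hX₀ : (0 : ℝ) < #X := by exact_mod_cast hX.card_pos
  have hY₀ : (0 : ℝ) < #Y :=
    pos_of_mul_pos_right ((by positivity : (0 : ℝ) < 2 ^ _).trans_le hY) (by positivity)
  have weighted (σ : (ι → κ) → ℝ) (hσ : ∀ x, |σ x| ≤ 1) :
      ∑ y ∈ Y, |∑ x ∈ X, σ x * bias x y z| ≤ #Y * (ε * #X) :=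
    sum_abs_sum_mul_bias_le hXp hp hr hY hε₀ hε₁.le hpε hσ z
  have rows : ∑ x ∈ X, |∑ y ∈ Y, bias x y z| ≤ ε * #X * #Y :=
    (sum_abs_sum_le_of_forall_abs_le_one weighted).trans_eq (mul_comm _ _)
  have columns : ∑ y ∈ Y, |∑ x ∈ X, bias x y z| ≤ ε * #Y * #X := by
    simpa [mul_left_comm, mul_assoc] using weighted 1 (by simp)
  rw [sum_congr rfl fun x hx => by rw [sum_bias_right hx]] at rows
  rw [sum_congr rfl fun y hy => by rw [sum_bias_left X hy]] at columns
  have mapsTo {p} (hp : p ∈ gadgetFiber X Y z) : p.1 ∈ X ∧ p.2 ∈ Y :=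
    mem_product.1 (mem_filter.1 hp).1
  obtain ⟨hne, hfst⟩ := nonempty_and_tvUniformMap_le (fun _ hp => (mapsTo hp).1) hX hY₀ hε₁ rows
  exact ⟨hne, hfst, (nonempty_and_tvUniformMap_le (fun _ hp => (mapsTo hp).2)
    (card_pos.1 (by exact_mod_cast hY₀)) hX₀ hε₁ columns).2⟩

end Gadget

lemma eight_mul_rpow_le {n m : ℝ} (hn : 2 ≤ n) (hm : n ^ 13 ≤ m) :
    8 * n * n ^ 3 * m ^ (-0.9 : ℝ) ≤ (1 / n ^ 2) ^ 2 := by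
  have hn₀ : 0 < n := by linarith
  have eight_le : 8 ≤ n ^ 3 :=
    (show (8 : ℝ) = 2 ^ 3 by norm_num).trans_le (by gcongr)
  have rpow_le : m ^ (-0.9 : ℝ) ≤ (n ^ 11)⁻¹ := by
    calc m ^ (-0.9 : ℝ) ≤ (n ^ 13) ^ (-0.9 : ℝ) :=
          Real.rpow_le_rpow_of_nonpos (by positivity) hm (by norm_num)
      _ = n ^ (-11.7 : ℝ) := by
          rw [← Real.rpow_natCast, ← Real.rpow_mul hn₀.le]
          norm_num
      _ ≤ n ^ (-(11 : ℕ) : ℝ) :=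
          Real.rpow_le_rpow_of_exponent_le (by linarith) (by norm_num)
      _ = (n ^ 11)⁻¹ := by rw [Real.rpow_neg hn₀.le, Real.rpow_natCast]
  calc 8 * n * n ^ 3 * m ^ (-0.9 : ℝ) ≤ 8 * n * n ^ 3 * (n ^ 11)⁻¹ := by gcongr
    _ ≤ n ^ 3 * n * n ^ 3 * (n ^ 11)⁻¹ := by gcongr
    _ = (1 / n ^ 2) ^ 2 := by field_simp

lemma two_pow_le_of_sub_logb_le {a r c : ℕ} (hc : 0 < c) (h : (a : ℝ) - Real.logb 2 c ≤ r) :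
    (2 : ℝ) ^ a ≤ 2 ^ r * c := by
  calc (2 : ℝ) ^ a = 2 ^ (a : ℝ) := (Real.rpow_natCast _ _).symm
    _ ≤ 2 ^ (r + Real.logb 2 c) :=
        Real.rpow_le_rpow_of_exponent_le one_le_two (by linarith)
    _ = 2 ^ r * c := by
        rw [Real.rpow_add two_pos, Real.rpow_natCast,
          Real.rpow_logb two_pos (by norm_num) (by exact_mod_cast hc)]

end IndexGadget

open IndexGadget

theorem uniform_marginals_simple_general {ι κ : Type*} [Fintype ι] [DecidableEq ι] [Fintype κ]
    [DecidableEq κ] (hι : 2 ≤ Fintype.card ι) (hκ : Fintype.card ι ^ 13 ≤ Fintype.card κ)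
    {X : Finset (ι → κ)} (hX : X.Nonempty) {Y : Finset (ι → κ → Bool)} (hY : Y.Nonempty)
    (hXd : IsDense 0.9 X)
    (hYd : (Fintype.card ι : ℝ) * Fintype.card κ - Real.logb 2 #Y ≤ (Fintype.card ι : ℝ) ^ 3)
    (z : ι → Bool) :
    (gadgetFiber X Y z).Nonempty ∧
      tvUniformMap (gadgetFiber X Y z) Prod.fst X ≤ 1 / (Fintype.card ι : ℝ) ^ 2 ∧
      tvUniformMap (gadgetFiber X Y z) Prod.snd Y ≤ 1 / (Fintype.card ι : ℝ) ^ 2 := by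
  have hn : (2 : ℝ) ≤ Fintype.card ι := by exact_mod_cast hι
  have large : (2 : ℝ) ^ (Fintype.card ι * Fintype.card κ) ≤ 2 ^ Fintype.card ι ^ 3 * #Y :=
    two_pow_le_of_sub_logb_le hY.card_pos (by exact_mod_cast hYd)
  have error_lt_one : 1 / (Fintype.card ι : ℝ) ^ 2 < 1 :=
    (div_lt_one (by positivity)).2 (one_lt_pow₀ (by linarith) two_ne_zero)
  refine uniform_marginals_of_isSpread hX hXd.isSpread (by positivity) (by positivity) large
    (by positivity) error_lt_one ?_ z
  exact_mod_cast eight_mul_rpow_le hn (by exact_mod_cast hκ)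

/-- **Uniform marginals lemma (simple version).** There exists `N` such that for every
`n ≥ N` (with `m = n^256`): if `X ⊆ [m]^n` is nonempty and `0.9`-dense, and
`Y ⊆ ({0,1}^m)^n` is nonempty with deficiency `nm - log₂|Y| ≤ n³`, then for every
`z ∈ {0,1}^n` the slice `G⁻¹(z) ∩ (X × Y)` is nonempty and the marginals of the uniform
distribution on it are `1/n²`-close in total variation to uniform on `X` and `Y`. -/
theorem uniform_marginals_simple :
    ∃ N : ℕ, ∀ n : ℕ, N ≤ n →
    ∀ (X : Finset (Fin n → Fin (n ^ 256))) (Y : Finset (Fin n → Fin (n ^ 256) → Bool)),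
      X.Nonempty → Y.Nonempty →
      -- X is 0.9-dense
      (∀ I : Finset (Fin n), I.Nonempty → ∀ α : Fin n → Fin (n ^ 256),
        ((X.filter fun x => ∀ i ∈ I, x i = α i).card : ℝ) ≤
          (X.card : ℝ) * ((n ^ 256 : ℕ) : ℝ) ^ (-(0.9 * (I.card : ℝ)))) →
      -- deficiency of Y at most n³
      ((n : ℝ) * ((n ^ 256 : ℕ) : ℝ) - Real.logb 2 (Y.card : ℝ) ≤ (n : ℝ) ^ 3) →
      ∀ z : Fin n → Bool,
        -- G⁻¹(z) ∩ (X × Y) is nonempty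
        (((X ×ˢ Y).filter fun p => ∀ i, p.2 i (p.1 i) = z i).Nonempty) ∧
        -- the first marginal is 1/n²-close to uniform on X
        ((1 / 2) * ∑ x : Fin n → Fin (n ^ 256),
            |(((X ×ˢ Y).filter fun p => (∀ i, p.2 i (p.1 i) = z i) ∧ p.1 = x).card : ℝ) /
                (((X ×ˢ Y).filter fun p => ∀ i, p.2 i (p.1 i) = z i).card : ℝ) -
              (if x ∈ X then 1 / (X.card : ℝ) else 0)| ≤ 1 / (n : ℝ) ^ 2) ∧
        -- the second marginal is 1/n²-close to uniform on Y
        ((1 / 2) * ∑ y : Fin n → Fin (n ^ 256) → Bool,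
            |(((X ×ˢ Y).filter fun p => (∀ i, p.2 i (p.1 i) = z i) ∧ p.2 = y).card : ℝ) /
                (((X ×ˢ Y).filter fun p => ∀ i, p.2 i (p.1 i) = z i).card : ℝ) -
              (if y ∈ Y then 1 / (Y.card : ℝ) else 0)| ≤ 1 / (n : ℝ) ^ 2) := by
  refine ⟨2, fun n hn X Y hX hY hXd hYd z => ?_⟩
  have marginals := uniform_marginals_simple_general (by simpa)
    (by simpa using Nat.pow_le_pow_right (by lia) (by norm_num)) hX hY
    (fun I hI α => by convert hXd I hI α; simp) (by simpa using hYd) z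
  simp only [gadgetFiber, tvUniformMap, filter_filter, Fintype.card_fin] at marginals
  convert marginals
end

section
/- Uniform marginals lemma (general version): There exists N such that for every n ≥ N the following holds with m = n^256. Let ρ ∈ {0,1,*}^n be a partial assignment and let X × Y ⊆ [m]^n × ({0,1}^m)^n be a ρ-structured rectangle with nm − log₂|Y| ≤ n³. Then for every z ∈ {0,1}^n that agrees with ρ on the fixed positions fix(ρ), the set G^{-1}(z) ∩ (X × Y) is nonempty, and the uniform distribution on G^{-1}(z) ∩ (X × Y) has both of its marginal distributions 1/n²-close in total variation distance to the uniform distribution on X and to the uniform distribution on Y, respectively. -/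
open Finset

/-!
Let `F = ρ⁻¹(*)`. On `X × Y` the event `G(x, y) = z` says that the gadgets on `F` output `z`, and
`2 ^ |F|` times its indicator, minus one, is the sum over nonempty `S ⊆ F` of the characters
`χ_S(x, y) = ∏_{i ∈ S} (-1)^{yᵢ(xᵢ) ⊕ zᵢ}`. For weights `|s| ≤ 1` and uniform `y`, the `2q`-th
moment of `∑_{x ∈ X} s(x) χ_S(x, y)` is at most `((12 q)^|S| · #{(x, x') ∈ X² : x = x' on S})^q`:
expose the blocks `yᵢ`, `i ∈ S`, one at a time, using Khintchine's inequality for the exposed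
block and Minkowski's inequality in `L^q` for the remaining ones. Density of `X` bounds the number
of agreeing pairs by `|X|² m^{-0.9 |S|}`, and passing from all `y` to `y ∈ Y` costs a factor `2^q`
when the deficiency of `Y` is at most `q = n³`, which is absorbed after taking `2q`-th roots.
Hence `𝔼_{y ∈ Y} |𝔼_{x ∈ X} s(x) (2^|F| · 1[G(x, y) = z] - 1)|` is tiny: `s = 1` controls the
fibres of the slice over `Y`, and choosing for `s` the signs of the averages over `Y` controls
those over `X`.
-/

open scoped BigOperators

variable {ι Ω V α β γ : Type*}

section Averages

theorem expect_sum_pow_le [Fintype Ω] {q : ℕ} (hq : q ≠ 0) (s : Finset ι) {g : ι → Ω → ℝ}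
    {σ : ι → ℝ} (hg : ∀ i ω, 0 ≤ g i ω) (hσ : ∀ i, 0 ≤ σ i)
    (h : ∀ i ∈ s, 𝔼 ω, g i ω ^ q ≤ σ i ^ q) :
    𝔼 ω, (∑ i ∈ s, g i ω) ^ q ≤ (∑ i ∈ s, σ i) ^ q := by
  have : Fact (1 ≤ (q : ENNReal)) := ⟨by exact_mod_cast Nat.one_le_iff_ne_zero.2 hq⟩
  rcases isEmpty_or_nonempty Ω with hΩ | hΩ
  · simpa using pow_nonneg (sum_nonneg fun i _ => hσ i) q
  let toLp (f : Ω → ℝ) : PiLp q fun _ : Ω => ℝ := WithLp.toLp q f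
  have card_pos : (0 : ℝ) < Fintype.card Ω := by exact_mod_cast Fintype.card_pos
  have norm_pow (f : Ω → ℝ) (hf : ∀ ω, 0 ≤ f ω) :
      ‖toLp f‖ ^ q = Fintype.card Ω * 𝔼 ω, f ω ^ q := by
    rw [PiLp.norm_eq_of_nat q rfl, one_div, Real.rpow_inv_natCast_pow (by positivity) hq,
      Fintype.expect_eq_sum_div_card, mul_div_cancel₀ _ card_pos.ne']
    simp [toLp, abs_of_nonneg, hf]
  let c : ℝ := (Fintype.card Ω : ℝ) ^ (q⁻¹ : ℝ)
  have hc : c ^ q = Fintype.card Ω := Real.rpow_inv_natCast_pow card_pos.le hq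
  have norm_le (i) (hi : i ∈ s) : ‖toLp (g i)‖ ≤ c * σ i := by
    refine le_of_pow_le_pow_left₀ hq (mul_nonneg (by positivity) (hσ i)) ?_
    rw [norm_pow _ (hg i), mul_pow, hc]
    exact mul_le_mul_of_nonneg_left (h i hi) card_pos.le
  have minkowski : ‖toLp fun ω => ∑ i ∈ s, g i ω‖ ≤ c * ∑ i ∈ s, σ i := by
    have : (toLp fun ω => ∑ i ∈ s, g i ω) = ∑ i ∈ s, toLp (g i) := by
      ext ω; simp [toLp]
    rw [this, mul_sum]
    exact norm_sum_le_of_le s norm_le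
  have := pow_le_pow_left₀ (norm_nonneg _) minkowski q
  rw [norm_pow _ fun ω => sum_nonneg fun i _ => hg i ω, mul_pow, hc] at this
  exact le_of_mul_le_mul_left this card_pos

theorem expect_expect_update [Fintype V] [DecidableEq V] [Fintype β] (i : V) (f : (V → β) → ℝ) :
    𝔼 y, 𝔼 u, f (Function.update y i u) = 𝔼 y, f y := by
  let swap (p : (V → β) × β) : (V → β) × β := (Function.update p.1 i p.2, p.1 i)
  have swap_swap : Function.Involutive swap := fun p => by simp [swap]
  calc 𝔼 y, 𝔼 u, f (Function.update y i u)
      = 𝔼 p : (V → β) × β, f (swap p).1 :=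
        (expect_product' univ univ fun y u => f (Function.update y i u)).symm
    _ = 𝔼 p : (V → β) × β, f p.1 := Fintype.expect_equiv swap_swap.toPerm _ _ fun _ => rfl
    _ = 𝔼 y, 𝔼 _u : β, f y := expect_product' univ univ fun y _ => f y
    _ = 𝔼 y, f y := expect_congr rfl fun y _ => by
        have : Nonempty β := ⟨y i⟩
        exact Fintype.expect_const _

theorem expect_le_mul_expect_univ [Fintype γ] {s : Finset γ} {C : ℝ}
    (hs : Fintype.card γ ≤ C * #s) {f : γ → ℝ} (hf : ∀ x, 0 ≤ f x) :
    𝔼 x ∈ s, f x ≤ C * 𝔼 x, f x := by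
  rcases isEmpty_or_nonempty γ with hγ | hγ
  · simp [eq_empty_of_isEmpty s]
  have card_pos : (0 : ℝ) < Fintype.card γ := by exact_mod_cast Fintype.card_pos
  have hCs : 0 < C * #s := card_pos.trans_le hs
  have hsc : (0 : ℝ) < #s := (Nat.cast_nonneg _).lt_of_ne' (by rintro h; simp [h] at hCs)
  have : 0 < C := pos_of_mul_pos_left hCs hsc.le
  rw [expect_eq_sum_div_card, Fintype.expect_eq_sum_div_card, ← mul_div_assoc,
    div_le_div_iff₀ hsc card_pos]
  calc (∑ x ∈ s, f x) * Fintype.card γ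
      ≤ (∑ x, f x) * (C * #s) :=
        mul_le_mul (sum_le_univ_sum_of_nonneg hf) hs card_pos.le (sum_nonneg fun x _ => hf x)
    _ = C * (∑ x, f x) * #s := by ring

theorem expect_pow_le_expect_pow {s : Finset γ} {f : γ → ℝ} (hf : ∀ x ∈ s, 0 ≤ f x) {n : ℕ}
    (hn : n ≠ 0) : (𝔼 x ∈ s, f x) ^ n ≤ 𝔼 x ∈ s, f x ^ n := by
  rcases s.eq_empty_or_nonempty with rfl | hs
  · simp [hn]
  obtain ⟨k, rfl⟩ := Nat.exists_eq_add_one_of_ne_zero hn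
  have hsc : (0 : ℝ) < #s := by exact_mod_cast hs.card_pos
  rw [expect_eq_sum_div_card, expect_eq_sum_div_card, div_pow, div_le_div_iff₀ (by positivity) hsc]
  calc (∑ x ∈ s, f x) ^ (k + 1) * #s
      ≤ (#s ^ k * ∑ x ∈ s, f x ^ (k + 1)) * #s := by gcongr; exact pow_sum_le_card_mul_sum_pow hf k
    _ = _ := by ring

theorem expect_abs_expect_comm_le {s : Finset β} {t : Finset γ} {D : β → γ → ℝ} {η : ℝ}
    (h : ∀ ε : β → ℝ, (∀ x, |ε x| ≤ 1) → 𝔼 y ∈ t, |𝔼 x ∈ s, ε x * D x y| ≤ η) :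
    𝔼 x ∈ s, |𝔼 y ∈ t, D x y| ≤ η := by
  let ε (x : β) : ℝ := SignType.sign (𝔼 y ∈ t, D x y)
  have hε (x) : |ε x| ≤ 1 := by
    cases hx : SignType.sign (𝔼 y ∈ t, D x y) <;> simp [ε, hx]
  calc 𝔼 x ∈ s, |𝔼 y ∈ t, D x y|
      = 𝔼 x ∈ s, 𝔼 y ∈ t, ε x * D x y :=
        expect_congr rfl fun x _ => by rw [← mul_expect, sign_mul_self]
    _ = 𝔼 y ∈ t, 𝔼 x ∈ s, ε x * D x y := expect_comm ..
    _ ≤ 𝔼 y ∈ t, |𝔼 x ∈ s, ε x * D x y| := expect_le_expect fun y _ => le_abs_self _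
    _ ≤ η := h ε hε

end Averages

section Khintchine

variable [Fintype α] [DecidableEq α]

/-- The `±1`-valued indicator of `b = c`. With `c` fixed and `b` uniform it is a Rademacher sign. -/
def agreementSign (b c : Bool) : ℝ := if b = c then 1 else -1

theorem expect_exp_sum_agreementSign (a : α → ℝ) (c : Bool) :
    𝔼 u : α → Bool, Real.exp (∑ i, a i * agreementSign (u i) c) = ∏ i, Real.cosh (a i) := by
  have sum_eq : ∑ u : α → Bool, Real.exp (∑ i, a i * agreementSign (u i) c) =
      ∏ i, (2 * Real.cosh (a i)) := calc
    _ = ∑ u : α → Bool, ∏ i, Real.exp (a i * agreementSign (u i) c) := by simp only [Real.exp_sum]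
    _ = ∏ i, ∑ b : Bool, Real.exp (a i * agreementSign b c) := by
        rw [prod_univ_sum, Fintype.piFinset_univ]
    _ = ∏ i, (2 * Real.cosh (a i)) := prod_congr rfl fun i _ => by
        cases c <;> simp [agreementSign, Real.cosh_eq] <;> ring
  rw [Fintype.expect_eq_sum_div_card, sum_eq, prod_mul_distrib]
  simp

theorem expect_exp_sum_agreementSign_le (a : α → ℝ) (c : Bool) :
    𝔼 u : α → Bool, Real.exp (∑ i, a i * agreementSign (u i) c) ≤
      Real.exp ((∑ i, a i ^ 2) / 2) := by
  rw [expect_exp_sum_agreementSign, sum_div, Real.exp_sum]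
  exact prod_le_prod (fun i _ => (Real.cosh_pos _).le) fun i _ => Real.cosh_le_exp_half_sq _

theorem even_pow_le_factorial_mul_exp_add_exp_neg {n : ℕ} (hn : Even n) (x : ℝ) :
    x ^ n ≤ n.factorial * (Real.exp x + Real.exp (-x)) := by
  have h := Real.pow_div_factorial_le_exp |x| (abs_nonneg x) n
  rw [hn.pow_abs, div_le_iff₀' (by positivity)] at h
  exact h.trans (mul_le_mul_of_nonneg_left (Real.exp_abs_le x) (by positivity))

theorem expect_sum_agreementSign_pow_le_of_sum_sq_eq {q : ℕ} (hq : q ≠ 0) {a : α → ℝ}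
    (ha : ∑ i, a i ^ 2 = 2 * q) (c : Bool) :
    𝔼 u : α → Bool, (∑ i, a i * agreementSign (u i) c) ^ (2 * q) ≤ (24 * (q : ℝ) ^ 2) ^ q := by
  have exp_le : (Real.exp q : ℝ) ≤ 3 ^ q := by
    rw [← Real.exp_one_pow]
    exact pow_le_pow_left₀ (Real.exp_pos 1).le Real.exp_one_lt_three.le q
  have pos_le := expect_exp_sum_agreementSign_le a c
  have neg_le := expect_exp_sum_agreementSign_le (fun i => -a i) c
  simp only [neg_sq, neg_mul, sum_neg_distrib, ha, mul_div_cancel_left₀ (q : ℝ) two_ne_zero]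
    at pos_le neg_le
  calc 𝔼 u : α → Bool, (∑ i, a i * agreementSign (u i) c) ^ (2 * q)
      ≤ 𝔼 u : α → Bool, (2 * q).factorial * (Real.exp (∑ i, a i * agreementSign (u i) c) +
          Real.exp (-∑ i, a i * agreementSign (u i) c)) :=
        expect_le_expect fun u _ => even_pow_le_factorial_mul_exp_add_exp_neg (even_two_mul q) _
    _ ≤ (2 * q).factorial * (3 ^ q + 3 ^ q) := by
        rw [← mul_expect, expect_add_distrib]
        gcongr <;> exact le_trans ‹_› exp_le
    _ ≤ (2 * q) ^ (2 * q) * (2 ^ q * 3 ^ q) := by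
        gcongr
        · exact_mod_cast Nat.factorial_le_pow (2 * q)
        · rw [← two_mul]; gcongr; exact le_self_pow₀ one_le_two hq
    _ = (24 * (q : ℝ) ^ 2) ^ q := by rw [pow_mul, ← mul_pow, ← mul_pow]; ring

theorem expect_sum_agreementSign_pow_le {q : ℕ} (hq : q ≠ 0) (a : α → ℝ) (c : Bool) :
    𝔼 u : α → Bool, (∑ i, a i * agreementSign (u i) c) ^ (2 * q) ≤
      (12 * q * ∑ i, a i ^ 2) ^ q := by
  rcases (sum_nonneg fun i _ => sq_nonneg (a i) : 0 ≤ ∑ i, a i ^ 2).eq_or_lt with h | h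
  · have ha (i) : a i = 0 := by
      simpa using (sum_eq_zero_iff_of_nonneg fun i _ => sq_nonneg (a i)).1 h.symm i (mem_univ i)
    simp [ha, hq]
  set σ : ℝ := ∑ i, a i ^ 2
  have : (0 : ℝ) < q := by positivity
  let c₀ : ℝ := √(2 * q / σ)
  have hc₀ : c₀ ^ 2 = 2 * q / σ := Real.sq_sqrt (by positivity)
  have scaled := expect_sum_agreementSign_pow_le_of_sum_sq_eq hq (a := fun i => c₀ * a i)
    (by simp only [mul_pow, ← mul_sum, hc₀]; exact div_mul_cancel₀ _ h.ne') c
  simp only [mul_assoc, ← mul_sum, mul_pow c₀, ← mul_expect, pow_mul c₀, hc₀] at scaled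
  refine le_of_mul_le_mul_left (scaled.trans_eq ?_) (by positivity : 0 < (2 * q / σ) ^ q)
  rw [← mul_pow]
  congr 1
  field_simp
  norm_num

end Khintchine

section Characters

variable [DecidableEq V]

/-- The Fourier character `(-1)^{∑_{i ∈ S} (yᵢ(xᵢ) ⊕ zᵢ)}` of the gadget outputs on the coordinates
in `S`. -/
def agreementCharacter (z : V → Bool) (S : Finset V) (x : V → α) (y : V → α → Bool) : ℝ :=
  ∏ i ∈ S, agreementSign (y i (x i)) (z i)

theorem agreementCharacter_update {i : V} {S : Finset V} (hi : i ∉ S) (z : V → Bool) (x : V → α)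
    (y : V → α → Bool) (u : α → Bool) :
    agreementCharacter z S x (Function.update y i u) = agreementCharacter z S x y :=
  prod_congr rfl fun j hj => by rw [Function.update_of_ne (ne_of_mem_of_not_mem hj hi)]

theorem two_pow_mul_indicator_sub_one_eq_sum_agreementCharacter (F : Finset V) (z : V → Bool)
    (x : V → α) (y : V → α → Bool) [Decidable (∀ i ∈ F, y i (x i) = z i)] :
    (2 ^ #F * if ∀ i ∈ F, y i (x i) = z i then (1 : ℝ) else 0) - 1 =
      ∑ S ∈ F.powerset.erase ∅, agreementCharacter z S x y := by
  have prod_eq : ∏ i ∈ F, (1 + agreementSign (y i (x i)) (z i)) =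
      2 ^ #F * if ∀ i ∈ F, y i (x i) = z i then 1 else 0 := by
    have (i : V) : 1 + agreementSign (y i (x i)) (z i) =
        2 * if y i (x i) = z i then 1 else 0 := by
      unfold agreementSign; split_ifs <;> norm_num
    simp only [this, prod_mul_distrib, prod_const, prod_ite_zero, one_pow]
  rw [← prod_eq, prod_one_add, ← add_sum_erase _ _ (empty_mem_powerset F), prod_empty]
  exact add_sub_cancel_left _ _

theorem sum_pow_card_powerset_erase_empty (δ : ℝ) (F : Finset V) :
    ∑ S ∈ F.powerset.erase ∅, δ ^ #S = (1 + δ) ^ #F - 1 := by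
  rw [sum_erase_eq_sub (empty_mem_powerset F)]
  simpa [add_comm] using sum_pow_mul_eq_add_pow δ 1 F

variable [DecidableEq α]

/-- The pairs of elements of `X` that agree on `S`. Their number is the squared `ℓ²` norm of the
Fourier coefficients of `∑ x ∈ X, agreementCharacter z S x`. -/
def agreeingPairs (S : Finset V) (X : Finset (V → α)) : Finset ((V → α) × (V → α)) :=
  {p ∈ X ×ˢ X | ∀ i ∈ S, p.1 i = p.2 i}

theorem card_agreeingPairs_insert [Fintype α] (i : V) (S : Finset V) (X : Finset (V → α)) :
    #(agreeingPairs (insert i S) X) = ∑ a, #(agreeingPairs S {x ∈ X | x i = a}) := by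
  rw [card_eq_sum_card_fiberwise (f := fun p => p.1 i) (t := univ) fun _ _ => by simp]
  refine sum_congr rfl fun a _ => congr_arg card ?_
  ext p
  simp only [agreeingPairs, mem_filter, mem_product, forall_mem_insert]
  constructor
  · rintro ⟨⟨⟨h₁, h₂⟩, h, hS⟩, ha⟩
    exact ⟨⟨⟨h₁, ha⟩, h₂, h ▸ ha⟩, hS⟩
  · rintro ⟨⟨⟨h₁, ha₁⟩, h₂, ha₂⟩, hS⟩
    exact ⟨⟨⟨h₁, h₂⟩, ha₁.trans ha₂.symm, hS⟩, ha₁⟩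

theorem sum_mul_agreementCharacter_insert_update [Fintype α] {i : V} {S : Finset V} (hi : i ∉ S)
    (z : V → Bool) (X : Finset (V → α)) (s : (V → α) → ℝ) (y : V → α → Bool) (u : α → Bool) :
    ∑ x ∈ X, s x * agreementCharacter z (insert i S) x (Function.update y i u) =
      ∑ a, (∑ x ∈ X with x i = a, s x * agreementCharacter z S x y) *
        agreementSign (u a) (z i) := by
  rw [← sum_fiberwise X fun x => x i]
  refine sum_congr rfl fun a _ => ?_
  rw [sum_mul]
  refine sum_congr rfl fun x hx => ?_
  have := agreementCharacter_update hi z x y u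
  rw [agreementCharacter, prod_insert hi, Function.update_self, (mem_filter.1 hx).2,
    ← agreementCharacter, this]
  ring

-- Given the other blocks of `y`, the sum is a Rademacher sum in the `i`-th block, to which
-- Khintchine's inequality applies; Minkowski's inequality in `L^q` then pulls out the sum over the
-- values of `x i`.
theorem expect_sum_agreementCharacter_pow_le [Fintype V] [Fintype α] {q : ℕ} (hq : q ≠ 0)
    (z : V → Bool) {s : (V → α) → ℝ} (hs : ∀ x, |s x| ≤ 1) (S : Finset V)
    (X : Finset (V → α)) :
    𝔼 y, (∑ x ∈ X, s x * agreementCharacter z S x y) ^ (2 * q) ≤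
      ((12 * q) ^ #S * #(agreeingPairs S X)) ^ q := by
  induction S using Finset.induction_on generalizing X with
  | empty =>
    have sum_sq_le : (∑ x ∈ X, s x) ^ 2 ≤ #X * #X := by
      rw [← sq, sq_le_sq, abs_of_nonneg (Nat.cast_nonneg (α := ℝ) #X)]
      calc |∑ x ∈ X, s x| ≤ ∑ x ∈ X, |s x| := abs_sum_le_sum_abs _ _
        _ ≤ #X := by simpa using sum_le_sum fun x (_ : x ∈ X) => hs x
    simpa [agreementCharacter, agreeingPairs, pow_mul] using
      pow_le_pow_left₀ (sq_nonneg _) sum_sq_le q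
  | insert i S hi ih =>
    let b (a : α) (y : V → α → Bool) : ℝ :=
      ∑ x ∈ X with x i = a, s x * agreementCharacter z S x y
    let σ (a : α) : ℝ := (12 * q) ^ #S * #(agreeingPairs S {x ∈ X | x i = a})
    calc 𝔼 y, (∑ x ∈ X, s x * agreementCharacter z (insert i S) x y) ^ (2 * q)
        = 𝔼 y, 𝔼 u : α → Bool, (∑ a, b a y * agreementSign (u a) (z i)) ^ (2 * q) := by
          rw [← expect_expect_update i]
          simp only [sum_mul_agreementCharacter_insert_update hi, b]
      _ ≤ 𝔼 y, (12 * q * ∑ a, b a y ^ 2) ^ q :=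
          expect_le_expect fun y _ => expect_sum_agreementSign_pow_le hq _ _
      _ = (12 * q) ^ q * 𝔼 y, (∑ a, b a y ^ 2) ^ q := by simp only [mul_pow, mul_expect]
      _ ≤ (12 * q) ^ q * (∑ a, σ a) ^ q := by
          gcongr
          refine expect_sum_pow_le hq _ (fun a y => sq_nonneg _) (fun a => by positivity) ?_
          exact fun a _ => by simpa only [← pow_mul] using ih _
      _ = ((12 * q) ^ #(insert i S) * #(agreeingPairs (insert i S) X)) ^ q := by
          rw [card_agreeingPairs_insert, card_insert_of_notMem hi, ← mul_sum, Nat.cast_sum]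
          ring

end Characters

section Spread

variable [DecidableEq α]

/-- A set `X` of strings is `M`-spread on `F` if a uniform `x ∈ X` takes any given values on a
nonempty `S ⊆ F` with probability at most `M⁻¹ ^ #S`; `0.9`-density in an alphabet of size `m` is
the case `M = m ^ 0.9`. -/
def IsSpreadOn (M : ℝ) (F : Finset V) (X : Finset (V → α)) : Prop :=
  ∀ S ⊆ F, S.Nonempty → ∀ β : V → α, (#{x ∈ X | ∀ i ∈ S, x i = β i} : ℝ) ≤ #X * M⁻¹ ^ #S

variable {M : ℝ} {F : Finset V} {X : Finset (V → α)}

theorem isSpreadOn_rpow_of_dense [Fintype α] {θ : ℝ}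
    (h : ∀ S ⊆ F, S.Nonempty → ∀ β : V → α,
      (#{x ∈ X | ∀ i ∈ S, x i = β i} : ℝ) ≤ #X * (Fintype.card α : ℝ) ^ (-(θ * #S))) :
    IsSpreadOn ((Fintype.card α : ℝ) ^ θ) F X := fun S hSF hS β => by
  refine (h S hSF hS β).trans_eq ?_
  rw [← neg_mul, Real.rpow_mul_natCast (Nat.cast_nonneg _), Real.rpow_neg (Nat.cast_nonneg _)]

theorem IsSpreadOn.card_agreeingPairs_le (hX : IsSpreadOn M F X) {S : Finset V} (hSF : S ⊆ F)
    (hS : S.Nonempty) : (#(agreeingPairs S X) : ℝ) ≤ #X ^ 2 * M⁻¹ ^ #S := by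
  have card_eq : #(agreeingPairs S X) = ∑ x ∈ X, #{x' ∈ X | ∀ i ∈ S, x' i = x i} := by
    simp only [agreeingPairs, card_filter, sum_product, eq_comm]
  rw [card_eq, Nat.cast_sum]
  calc ∑ x ∈ X, (#{x' ∈ X | ∀ i ∈ S, x' i = x i} : ℝ)
      ≤ ∑ _x ∈ X, #X * M⁻¹ ^ #S := sum_le_sum fun x _ => hX S hSF hS x
    _ = #X ^ 2 * M⁻¹ ^ #S := by rw [sum_const, nsmul_eq_mul]; ring

variable [DecidableEq V] [Fintype V] [Fintype α] {q : ℕ} {δ : ℝ} {Y : Finset (V → α → Bool)}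

theorem IsSpreadOn.expect_abs_expect_agreementCharacter_le (hX : IsSpreadOn M F X) (hM : 0 ≤ M)
    (hq : q ≠ 0) (hδ : 0 ≤ δ) (hδM : 24 * q / M ≤ δ ^ 2)
    (hY : Fintype.card (V → α → Bool) ≤ (2 : ℝ) ^ q * #Y) (z : V → Bool)
    {s : (V → α) → ℝ} (hs : ∀ x, |s x| ≤ 1) {S : Finset V} (hSF : S ⊆ F) (hS : S.Nonempty) :
    𝔼 y ∈ Y, |𝔼 x ∈ X, s x * agreementCharacter z S x y| ≤ δ ^ #S := by
  rcases X.eq_empty_or_nonempty with rfl | hXne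
  · simpa using pow_nonneg hδ _
  have : (0 : ℝ) < #X := by exact_mod_cast hXne.card_pos
  refine le_of_pow_le_pow_left₀ (n := 2 * q) (by positivity) (by positivity) ?_
  have moment : 𝔼 y, (𝔼 x ∈ X, s x * agreementCharacter z S x y) ^ (2 * q) ≤
      ((12 * q / M) ^ #S) ^ q := by
    simp only [expect_eq_sum_div_card X, div_pow, ← expect_div]
    rw [div_le_iff₀ (by positivity)]
    calc 𝔼 y, (∑ x ∈ X, s x * agreementCharacter z S x y) ^ (2 * q)
        ≤ ((12 * q) ^ #S * #(agreeingPairs S X)) ^ q :=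
          expect_sum_agreementCharacter_pow_le hq z hs S X
      _ ≤ ((12 * q) ^ #S * (#X ^ 2 * M⁻¹ ^ #S)) ^ q := by
          gcongr; exact hX.card_agreeingPairs_le hSF hS
      _ = _ := by rw [inv_pow]; ring
  calc (𝔼 y ∈ Y, |𝔼 x ∈ X, s x * agreementCharacter z S x y|) ^ (2 * q)
      ≤ 𝔼 y ∈ Y, |𝔼 x ∈ X, s x * agreementCharacter z S x y| ^ (2 * q) :=
        expect_pow_le_expect_pow (fun _ _ => abs_nonneg _) (by positivity)
    _ = 𝔼 y ∈ Y, (𝔼 x ∈ X, s x * agreementCharacter z S x y) ^ (2 * q) := by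
        simp only [(even_two_mul q).pow_abs]
    _ ≤ 2 ^ q * ((12 * q / M) ^ #S) ^ q :=
        (expect_le_mul_expect_univ hY fun _ => (even_two_mul q).pow_nonneg _).trans
          (by gcongr)
    _ ≤ (2 ^ #S) ^ q * ((12 * q / M) ^ #S) ^ q := by
        gcongr; exact le_self_pow₀ one_le_two hS.card_ne_zero
    _ = ((24 * q / M) ^ #S) ^ q := by rw [← mul_pow, ← mul_pow]; ring
    _ ≤ ((δ ^ 2) ^ #S) ^ q := by gcongr
    _ = (δ ^ #S) ^ (2 * q) := by ring

theorem IsSpreadOn.expect_abs_expect_agreement_le (hX : IsSpreadOn M F X) (hM : 0 ≤ M)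
    (hq : q ≠ 0) (hδ : 0 ≤ δ) (hδM : 24 * q / M ≤ δ ^ 2)
    (hY : Fintype.card (V → α → Bool) ≤ (2 : ℝ) ^ q * #Y) (z : V → Bool)
    {s : (V → α) → ℝ} (hs : ∀ x, |s x| ≤ 1) :
    𝔼 y ∈ Y, |𝔼 x ∈ X, s x * ((2 ^ #F * if ∀ i ∈ F, y i (x i) = z i then (1 : ℝ) else 0) - 1)| ≤
      (1 + δ) ^ #F - 1 := by
  simp only [two_pow_mul_indicator_sub_one_eq_sum_agreementCharacter, mul_sum,
    expect_sum_comm X]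
  calc 𝔼 y ∈ Y, |∑ S ∈ F.powerset.erase ∅, 𝔼 x ∈ X, s x * agreementCharacter z S x y|
      ≤ 𝔼 y ∈ Y, ∑ S ∈ F.powerset.erase ∅, |𝔼 x ∈ X, s x * agreementCharacter z S x y| :=
        expect_le_expect fun y _ => abs_sum_le_sum_abs _ _
    _ = ∑ S ∈ F.powerset.erase ∅, 𝔼 y ∈ Y, |𝔼 x ∈ X, s x * agreementCharacter z S x y| :=
        expect_sum_comm ..
    _ ≤ ∑ S ∈ F.powerset.erase ∅, δ ^ #S := sum_le_sum fun S hS => by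
        obtain ⟨hne, hSF⟩ := mem_erase.1 hS
        exact hX.expect_abs_expect_agreementCharacter_le hM hq hδ hδM hY z hs
          (mem_powerset.1 hSF) (nonempty_iff_ne_empty.2 hne)
    _ = (1 + δ) ^ #F - 1 := sum_pow_card_powerset_erase_empty δ F

end Spread

section TotalVariation

variable [Fintype β] [DecidableEq β]

/-- The total variation distance between the distribution of `π p` for a uniform `p ∈ P` and the
uniform distribution on `X`. -/
noncomputable def tvDistMapUniform (π : γ → β) (P : Finset γ) (X : Finset β) : ℝ :=
  1 / 2 * ∑ x, |(#{p ∈ P | π p = x} : ℝ) / #P - if x ∈ X then 1 / (#X : ℝ) else 0|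

variable {π : γ → β} {P : Finset γ} {X : Finset β} {κ η : ℝ}

theorem tvDistMapUniform_eq_sum (hπ : ∀ p ∈ P, π p ∈ X) :
    tvDistMapUniform π P X = 1 / 2 * ∑ x ∈ X, |(#{p ∈ P | π p = x} : ℝ) / #P - 1 / #X| := by
  rw [tvDistMapUniform]
  congr 1
  refine (sum_subset_zero_on_sdiff (subset_univ X) (fun x hx => ?_) fun x hx => ?_).symm
  · have hxX : x ∉ X := (mem_sdiff.1 hx).2
    have fiber_empty : ({p ∈ P | π p = x} : Finset γ) = ∅ :=
      filter_eq_empty_iff.2 fun p hp hpx => hxX (hpx ▸ hπ p hp)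
    simp [fiber_empty, hxX]
  · rw [if_pos hx]

omit [Fintype β] in
theorem abs_mul_card_sub_card_le_of_fiber_discrepancy (hX : X.Nonempty)
    (hπ : ∀ p ∈ P, π p ∈ X) (h : 𝔼 x ∈ X, |κ * #{p ∈ P | π p = x} - 1| ≤ η) :
    |κ * #P - #X| ≤ η * #X := by
  have card_pos : (0 : ℝ) < #X := by exact_mod_cast hX.card_pos
  rw [expect_eq_sum_div_card, div_le_iff₀ card_pos] at h
  calc |κ * #P - #X| = |∑ x ∈ X, (κ * #{p ∈ P | π p = x} - 1)| := by
        rw [sum_sub_distrib, ← mul_sum, ← Nat.cast_sum, ← card_eq_sum_card_fiberwise hπ]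
        simp
    _ ≤ ∑ x ∈ X, |κ * #{p ∈ P | π p = x} - 1| := abs_sum_le_sum_abs _ _
    _ ≤ η * #X := h

theorem abs_div_sub_one_div_le (k : ℝ) {a b : ℝ} (ha : 0 < a) (hb : 0 < κ * b) :
    |k / b - 1 / a| ≤ (|κ * k - 1| + |κ * b - a| / a) / (κ * b) := by
  have κ_ne : κ ≠ 0 := left_ne_zero_of_mul hb.ne'
  have b_ne : b ≠ 0 := right_ne_zero_of_mul hb.ne'
  have : k / b - 1 / a = ((κ * k - 1) - (κ * b - a) / a) / (κ * b) := by
    field_simp; ring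
  rw [this, abs_div, abs_of_pos hb]
  gcongr
  exact (abs_sub _ _).trans_eq (by rw [abs_div, abs_of_pos ha])

theorem tvDistMapUniform_le_of_fiber_discrepancy (hX : X.Nonempty) (hπ : ∀ p ∈ P, π p ∈ X)
    (h : 𝔼 x ∈ X, |κ * #{p ∈ P | π p = x} - 1| ≤ η) (hη : η < 1) :
    tvDistMapUniform π P X ≤ η / (1 - η) := by
  have card_pos : (0 : ℝ) < #X := by exact_mod_cast hX.card_pos
  have lower_pos : 0 < (1 - η) * #X := mul_pos (sub_pos.2 hη) card_pos
  have total_le := abs_mul_card_sub_card_le_of_fiber_discrepancy hX hπ h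
  have le_total : (1 - η) * #X ≤ κ * #P := by linarith [(abs_le.1 total_le).1]
  have sum_le : ∑ x ∈ X, |κ * #{p ∈ P | π p = x} - 1| ≤ η * #X := by
    rwa [expect_eq_sum_div_card, div_le_iff₀ card_pos] at h
  calc tvDistMapUniform π P X
      = 1 / 2 * ∑ x ∈ X, |(#{p ∈ P | π p = x} : ℝ) / #P - 1 / #X| := tvDistMapUniform_eq_sum hπ
    _ ≤ 1 / 2 * ∑ x ∈ X, (|κ * #{p ∈ P | π p = x} - 1| + |κ * #P - #X| / #X) / (κ * #P) := by
        gcongr with x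
        exact abs_div_sub_one_div_le _ card_pos (lower_pos.trans_le le_total)
    _ = 1 / 2 * ((∑ x ∈ X, |κ * #{p ∈ P | π p = x} - 1| + |κ * #P - #X|) / (κ * #P)) := by
        rw [← sum_div, sum_add_distrib, sum_const, nsmul_eq_mul, mul_div_cancel₀ _ card_pos.ne']
    _ ≤ 1 / 2 * ((η * #X + η * #X) / ((1 - η) * #X)) := by
        have : 0 ≤ η * #X := (abs_nonneg _).trans total_le
        gcongr
    _ = η / (1 - η) := by
        have := (sub_pos.2 hη).ne'
        field_simp; ring

end TotalVariation

section Rectangle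

theorem expect_mul_indicator_sub_one {s : Finset γ} (hs : s.Nonempty) (L : ℝ) (p : γ → Prop)
    [DecidablePred p] :
    𝔼 y ∈ s, (L * (if p y then 1 else 0) - 1) = L / #s * #{y ∈ s | p y} - 1 := by
  rw [expect_sub_distrib, expect_const hs, ← mul_expect, expect_eq_sum_div_card, sum_boole]
  ring

variable {A B : Type*}

theorem card_filter_product_fst_eq [DecidableEq A] {X : Finset A} (Y : Finset B)
    (R : A → B → Prop) [∀ x y, Decidable (R x y)] {x : A} (hx : x ∈ X) :
    #{p ∈ {p ∈ X ×ˢ Y | R p.1 p.2} | p.1 = x} = #{y ∈ Y | R x y} := by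
  classical
  rw [← card_image_of_injective {y ∈ Y | R x y} (Prod.mk_right_injective x)]
  congr 1
  ext ⟨a, b⟩
  simp only [mem_filter, mem_product, mem_image, Prod.mk.injEq]
  grind

theorem card_filter_product_snd_eq [DecidableEq B] (X : Finset A) {Y : Finset B}
    (R : A → B → Prop) [∀ x y, Decidable (R x y)] {y : B} (hy : y ∈ Y) :
    #{p ∈ {p ∈ X ×ˢ Y | R p.1 p.2} | p.2 = y} = #{x ∈ X | R x y} := by
  classical
  rw [← card_image_of_injective {x ∈ X | R x y} (Prod.mk_left_injective y)]
  congr 1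
  ext ⟨a, b⟩
  simp only [mem_filter, mem_product, mem_image, Prod.mk.injEq]
  grind

theorem marginals_close_of_discrepancy [Fintype A] [DecidableEq A] [Fintype B] [DecidableEq B]
    {X : Finset A} {Y : Finset B} (hX : X.Nonempty) (hY : Y.Nonempty) (R : A → B → Prop)
    [∀ x y, Decidable (R x y)] {L η : ℝ} (hη : η < 1)
    (h : ∀ s : A → ℝ, (∀ x, |s x| ≤ 1) →
      𝔼 y ∈ Y, |𝔼 x ∈ X, s x * (L * (if R x y then (1 : ℝ) else 0) - 1)| ≤ η) :
    ({p ∈ X ×ˢ Y | R p.1 p.2} : Finset (A × B)).Nonempty ∧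
      tvDistMapUniform Prod.fst {p ∈ X ×ˢ Y | R p.1 p.2} X ≤ η / (1 - η) ∧
      tvDistMapUniform Prod.snd {p ∈ X ×ˢ Y | R p.1 p.2} Y ≤ η / (1 - η) := by
  set P : Finset (A × B) := {p ∈ X ×ˢ Y | R p.1 p.2}
  have fst_mem (p) (hp : p ∈ P) : p.1 ∈ X := (mem_product.1 (mem_filter.1 hp).1).1
  have snd_mem (p) (hp : p ∈ P) : p.2 ∈ Y := (mem_product.1 (mem_filter.1 hp).1).2
  have fst_discrepancy : 𝔼 x ∈ X, |L / #Y * #{p ∈ P | p.1 = x} - 1| ≤ η := by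
    refine le_of_eq_of_le (expect_congr rfl fun x hx => ?_) (expect_abs_expect_comm_le h)
    rw [expect_mul_indicator_sub_one hY, card_filter_product_fst_eq Y R hx]
  have snd_discrepancy : 𝔼 y ∈ Y, |L / #X * #{p ∈ P | p.2 = y} - 1| ≤ η := by
    refine le_of_eq_of_le (expect_congr rfl fun y hy => ?_) (h (fun _ => 1) (by simp))
    simp only [one_mul]
    rw [expect_mul_indicator_sub_one hX, card_filter_product_snd_eq X R hy]
  refine ⟨nonempty_iff_ne_empty.2 fun hP => ?_,
    tvDistMapUniform_le_of_fiber_discrepancy hX fst_mem fst_discrepancy hη,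
    tvDistMapUniform_le_of_fiber_discrepancy hY snd_mem snd_discrepancy hη⟩
  have card_le := abs_mul_card_sub_card_le_of_fiber_discrepancy hX fst_mem fst_discrepancy
  have card_pos : (0 : ℝ) < #X := by exact_mod_cast hX.card_pos
  simp only [hP, card_empty, Nat.cast_zero, mul_zero, zero_sub, abs_neg, Nat.abs_cast] at card_le
  nlinarith

end Rectangle

section Parameters

theorem one_add_inv_pow_four_pow_sub_one_le {n k : ℕ} (hn : 2 ≤ n) (hk : k ≤ n) :
    (1 + ((n : ℝ) ^ 4)⁻¹) ^ k - 1 ≤ ((n : ℝ) ^ 2 + 1)⁻¹ := by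
  have two_le : (2 : ℝ) ≤ n := by exact_mod_cast hn
  have : (0 : ℝ) < n := by linarith
  have pow_le_exp : (1 + ((n : ℝ) ^ 4)⁻¹) ^ k ≤ Real.exp ((n : ℝ) ^ 3)⁻¹ := calc
    _ ≤ (1 + ((n : ℝ) ^ 4)⁻¹) ^ n := pow_le_pow_right₀ (by simp) hk
    _ ≤ Real.exp ((n : ℝ) ^ 4)⁻¹ ^ n := by
        gcongr; rw [add_comm]; exact Real.add_one_le_exp _
    _ = Real.exp ((n : ℝ) ^ 3)⁻¹ := by rw [← Real.exp_nat_mul]; congr 1; field_simp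
  have exp_mul_le : Real.exp ((n : ℝ) ^ 3)⁻¹ * (1 - ((n : ℝ) ^ 3)⁻¹) ≤ 1 := by
    have := Real.one_sub_le_exp_neg ((n : ℝ) ^ 3)⁻¹
    calc _ ≤ Real.exp ((n : ℝ) ^ 3)⁻¹ * Real.exp (-((n : ℝ) ^ 3)⁻¹) := by gcongr
      _ = 1 := by rw [← Real.exp_add, add_neg_cancel, Real.exp_zero]
  have inv_mul_le : ((n : ℝ) ^ 3)⁻¹ * (n ^ 2 + 2) ≤ 1 := by
    rw [inv_mul_le_iff₀ (by positivity)]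
    nlinarith [sq_nonneg (n : ℝ)]
  have add_inv_eq : 1 + ((n : ℝ) ^ 2 + 1)⁻¹ = ((n : ℝ) ^ 2 + 1 + 1) / ((n : ℝ) ^ 2 + 1) := by
    field_simp
  rw [sub_le_iff_le_add', add_inv_eq, le_div_iff₀ (by positivity)]
  have one_le : (n : ℝ) ^ 2 + 1 ≤ (1 - ((n : ℝ) ^ 3)⁻¹) * (n ^ 2 + 2) := by linarith
  calc (1 + ((n : ℝ) ^ 4)⁻¹) ^ k * ((n : ℝ) ^ 2 + 1)
      ≤ Real.exp ((n : ℝ) ^ 3)⁻¹ * ((1 - ((n : ℝ) ^ 3)⁻¹) * (n ^ 2 + 2)) := by gcongr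
    _ = (Real.exp ((n : ℝ) ^ 3)⁻¹ * (1 - ((n : ℝ) ^ 3)⁻¹)) * (n ^ 2 + 2) := by ring
    _ ≤ n ^ 2 + 1 + 1 := by nlinarith

theorem twentyFour_mul_div_rpow_le {n m : ℕ} (hn : 2 ≤ n) (hm : n ^ 18 ≤ m) :
    24 * ((n ^ 3 : ℕ) : ℝ) / (m : ℝ) ^ (0.9 : ℝ) ≤ (((n : ℝ) ^ 4)⁻¹) ^ 2 := by
  have two_le : (2 : ℝ) ≤ n := by exact_mod_cast hn
  have n_pos : (0 : ℝ) < n := by linarith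
  have pow_le_rpow : (n : ℝ) ^ 16 ≤ (m : ℝ) ^ (0.9 : ℝ) := calc
    (n : ℝ) ^ 16 = (n : ℝ) ^ (16 : ℝ) := by norm_cast
    _ ≤ (n : ℝ) ^ (18 * 0.9 : ℝ) := Real.rpow_le_rpow_of_exponent_le (by linarith) (by norm_num)
    _ = ((n : ℝ) ^ 18) ^ (0.9 : ℝ) := by rw [Real.rpow_mul n_pos.le]; norm_cast
    _ ≤ (m : ℝ) ^ (0.9 : ℝ) := by gcongr; exact_mod_cast hm
  calc 24 * ((n ^ 3 : ℕ) : ℝ) / (m : ℝ) ^ (0.9 : ℝ)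
      ≤ (n : ℝ) ^ 5 * n ^ 3 / n ^ 16 := by
        push_cast
        gcongr
        calc (24 : ℝ) ≤ 2 ^ 5 := by norm_num
          _ ≤ (n : ℝ) ^ 5 := by gcongr
    _ = (((n : ℝ) ^ 4)⁻¹) ^ 2 := by field_simp

end Parameters

section UniformMarginals

variable [Fintype V] [DecidableEq V] [Fintype α] [DecidableEq α]

/-- The slice `G⁻¹(z) ∩ (X × Y)`, where `G` applies the index gadget `(x, y) ↦ y x` in each
coordinate. -/
def gadgetSlice (X : Finset (V → α)) (Y : Finset (V → α → Bool)) (z : V → Bool) :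
    Finset ((V → α) × (V → α → Bool)) :=
  {p ∈ X ×ˢ Y | ∀ i, p.2 i (p.1 i) = z i}

theorem IsSpreadOn.gadgetSlice_marginals_close {M : ℝ} {F : Finset V} {X : Finset (V → α)}
    {Y : Finset (V → α → Bool)} {q : ℕ} {δ : ℝ} {z : V → Bool} (hX : IsSpreadOn M F X)
    (hXne : X.Nonempty) (hYne : Y.Nonempty)
    (hagree : ∀ x ∈ X, ∀ y ∈ Y, ∀ i ∉ F, y i (x i) = z i) (hM : 0 ≤ M) (hq : q ≠ 0) (hδ : 0 ≤ δ)
    (hδM : 24 * q / M ≤ δ ^ 2) (hY : Fintype.card (V → α → Bool) ≤ (2 : ℝ) ^ q * #Y)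
    {η : ℝ} (hδη : (1 + δ) ^ #F - 1 ≤ η) (hη : η < 1) :
    (gadgetSlice X Y z).Nonempty ∧
      tvDistMapUniform Prod.fst (gadgetSlice X Y z) X ≤ η / (1 - η) ∧
      tvDistMapUniform Prod.snd (gadgetSlice X Y z) Y ≤ η / (1 - η) := by
  have slice_eq : gadgetSlice X Y z = {p ∈ X ×ˢ Y | ∀ i ∈ F, p.2 i (p.1 i) = z i} := by
    refine filter_congr fun p hp => ⟨fun h i _ => h i, fun h i => ?_⟩
    obtain ⟨hx, hy⟩ := mem_product.1 hp
    exact if hi : i ∈ F then h i hi else hagree _ hx _ hy i hi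
  rw [slice_eq]
  exact marginals_close_of_discrepancy hXne hYne (fun x y => ∀ i ∈ F, y i (x i) = z i) hη
    fun s hs => (hX.expect_abs_expect_agreement_le hM hq hδ hδM hY z hs).trans hδη

theorem card_le_two_pow_mul_card_of_deficiency_le {Y : Finset (V → α → Bool)}
    (hY : Y.Nonempty) {q : ℕ}
    (h : (Fintype.card V : ℝ) * Fintype.card α - Real.logb 2 #Y ≤ q) :
    Fintype.card (V → α → Bool) ≤ (2 : ℝ) ^ q * #Y := by
  have card_pos : (0 : ℝ) < #Y := by exact_mod_cast hY.card_pos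
  calc (Fintype.card (V → α → Bool) : ℝ)
      = 2 ^ ((Fintype.card V : ℝ) * Fintype.card α) := by
        rw [← Nat.cast_mul, Real.rpow_natCast, mul_comm, pow_mul]; simp
    _ ≤ 2 ^ (q + Real.logb 2 #Y) :=
        Real.rpow_le_rpow_of_exponent_le one_le_two (by linarith)
    _ = 2 ^ q * #Y := by
        rw [Real.rpow_add two_pos, Real.rpow_natCast,
          Real.rpow_logb two_pos (by norm_num) card_pos]

theorem uniform_marginals_general_general (hV : 2 ≤ Fintype.card V)
    (hα : Fintype.card V ^ 18 ≤ Fintype.card α) (ρ : V → Option Bool) {X : Finset (V → α)}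
    {Y : Finset (V → α → Bool)} (hX : X.Nonempty) (hY : Y.Nonempty)
    (hdense : IsSpreadOn ((Fintype.card α : ℝ) ^ (0.9 : ℝ)) {i | ρ i = none} X)
    (hfixed : ∀ x ∈ X, ∀ y ∈ Y, ∀ i b, ρ i = some b → y i (x i) = b)
    (hdef : (Fintype.card V : ℝ) * Fintype.card α - Real.logb 2 #Y ≤ (Fintype.card V : ℝ) ^ 3)
    {z : V → Bool} (hz : ∀ i b, ρ i = some b → z i = b) :
    (gadgetSlice X Y z).Nonempty ∧
      tvDistMapUniform Prod.fst (gadgetSlice X Y z) X ≤ 1 / (Fintype.card V : ℝ) ^ 2 ∧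
      tvDistMapUniform Prod.snd (gadgetSlice X Y z) Y ≤ 1 / (Fintype.card V : ℝ) ^ 2 := by
  set n := Fintype.card V
  have n_pos : (0 : ℝ) < n := by exact_mod_cast two_pos.trans_le hV
  have agree_fixed : ∀ x ∈ X, ∀ y ∈ Y, ∀ i ∉ ({i | ρ i = none} : Finset V), y i (x i) = z i := by
    intro x hx y hy i hi
    obtain ⟨b, hb⟩ := Option.ne_none_iff_exists'.1 fun h => hi ((mem_filter_univ i).2 h)
    rw [hfixed x hx y hy i b hb, hz i b hb]
  have η_lt : ((n : ℝ) ^ 2 + 1)⁻¹ < 1 := inv_lt_one_of_one_lt₀ (by linarith [pow_pos n_pos 2])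
  have odds_eq : ((n : ℝ) ^ 2 + 1)⁻¹ / (1 - ((n : ℝ) ^ 2 + 1)⁻¹) = 1 / (n : ℝ) ^ 2 := by
    have : 1 - ((n : ℝ) ^ 2 + 1)⁻¹ = (n : ℝ) ^ 2 / ((n : ℝ) ^ 2 + 1) := by field_simp; ring
    rw [this]; field_simp
  rw [← odds_eq]
  exact hdense.gadgetSlice_marginals_close hX hY agree_fixed (by positivity)
    (pow_pos (two_pos.trans_le hV) 3).ne' (by positivity) (twentyFour_mul_div_rpow_le hV hα)
    (card_le_two_pow_mul_card_of_deficiency_le hY (by exact_mod_cast hdef))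
    (one_add_inv_pow_four_pow_sub_one_le hV (card_le_univ _)) η_lt

end UniformMarginals

/-- **Uniform marginals lemma (general version).** For `ρ ∈ {0,1,*}^n` (encoded as
`ρ : Fin n → Option Bool`, with `none` meaning `*`) and a `ρ`-structured rectangle
`X × Y` with `nm - log₂|Y| ≤ n³`: for every `z` consistent with `ρ`, the slice
`G⁻¹(z) ∩ (X × Y)` is nonempty and the marginals of the uniform distribution on it are
`1/n²`-close in total variation to uniform on `X` and on `Y`. -/
theorem uniform_marginals_general :
    ∃ N : ℕ, ∀ n : ℕ, N ≤ n →
    ∀ (ρ : Fin n → Option Bool)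
      (X : Finset (Fin n → Fin (n ^ 256))) (Y : Finset (Fin n → Fin (n ^ 256) → Bool)),
      X.Nonempty → Y.Nonempty →
      -- all elements of X agree on the fixed positions of ρ
      (∀ x ∈ X, ∀ x' ∈ X, ∀ i : Fin n, ρ i ≠ none → x i = x' i) →
      -- the projection of X to free(ρ) is 0.9-dense
      (∀ I : Finset (Fin n), (∀ i ∈ I, ρ i = none) → I.Nonempty →
        ∀ α : Fin n → Fin (n ^ 256),
        ((X.filter fun x => ∀ i ∈ I, x i = α i).card : ℝ) ≤
          (X.card : ℝ) * ((n ^ 256 : ℕ) : ℝ) ^ (-(0.9 * (I.card : ℝ)))) →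
      -- every output G(x,y) on X × Y is consistent with ρ
      (∀ x ∈ X, ∀ y ∈ Y, ∀ i : Fin n, ∀ b : Bool, ρ i = some b → y i (x i) = b) →
      -- deficiency of Y at most n³
      ((n : ℝ) * ((n ^ 256 : ℕ) : ℝ) - Real.logb 2 (Y.card : ℝ) ≤ (n : ℝ) ^ 3) →
      ∀ z : Fin n → Bool,
        -- z agrees with ρ on the fixed positions
        (∀ i : Fin n, ∀ b : Bool, ρ i = some b → z i = b) →
        -- G⁻¹(z) ∩ (X × Y) is nonempty
        (((X ×ˢ Y).filter fun p => ∀ i, p.2 i (p.1 i) = z i).Nonempty) ∧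
        -- the first marginal is 1/n²-close to uniform on X
        ((1 / 2) * ∑ x : Fin n → Fin (n ^ 256),
            |(((X ×ˢ Y).filter fun p => (∀ i, p.2 i (p.1 i) = z i) ∧ p.1 = x).card : ℝ) /
                (((X ×ˢ Y).filter fun p => ∀ i, p.2 i (p.1 i) = z i).card : ℝ) -
              (if x ∈ X then 1 / (X.card : ℝ) else 0)| ≤ 1 / (n : ℝ) ^ 2) ∧
        -- the second marginal is 1/n²-close to uniform on Y
        ((1 / 2) * ∑ y : Fin n → Fin (n ^ 256) → Bool,
            |(((X ×ˢ Y).filter fun p => (∀ i, p.2 i (p.1 i) = z i) ∧ p.2 = y).card : ℝ) /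
                (((X ×ˢ Y).filter fun p => ∀ i, p.2 i (p.1 i) = z i).card : ℝ) -
              (if y ∈ Y then 1 / (Y.card : ℝ) else 0)| ≤ 1 / (n : ℝ) ^ 2) := by
  refine ⟨2, fun n hn ρ X Y hX hY _ hdense hfixed hdef z hz => ?_⟩
  have spread : IsSpreadOn ((Fintype.card (Fin (n ^ 256)) : ℝ) ^ (0.9 : ℝ)) {i | ρ i = none} X :=
    isSpreadOn_rpow_of_dense fun S hS hne β => by
      rw [Fintype.card_fin]
      convert hdense S (fun i hi => (mem_filter_univ i).1 (hS hi)) hne β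
  have close := uniform_marginals_general_general (by simpa using hn)
    (by simpa using Nat.pow_le_pow_right (by lia) (by norm_num)) ρ hX hY spread hfixed
    (by simpa using hdef) hz
  simp only [gadgetSlice, tvDistMapUniform, filter_filter, Fintype.card_fin] at close
  -- `convert` identifies the decidability instances specific to `Fin n` with the generic ones.
  convert close
end

section
/- Pointwise uniformity lemma: There exists N such that for every n ≥ N the following holds with m = n^256. Let ρ ∈ {0,1,*}^n and let X × Y ⊆ [m]^n × ({0,1}^m)^n be a ρ-essentially-structured rectangle with nm − log₂|Y| ≤ n³ + 1. Then for every z ∈ {0,1}^n that agrees with ρ on fix(ρ), the number of pairs (x,y) ∈ X × Y with G(x,y) = z satisfies (1 − 1/n³) · 2^(−|free(ρ)|) · |X| · |Y| ≤ |G^{-1}(z) ∩ (X × Y)| ≤ (1 + 1/n³) · 2^(−|free(ρ)|) · |X| · |Y|; in particular, the distribution of G(x,y) for (x,y) uniform on X × Y is 1/n³-pointwise-close to the uniform distribution on the set of all z consistent with ρ. -/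
open Finset

/-!
Expand the indicator of `G(x, y) = z` in characters, so that everything rests on the bias of
`χ_S(G(x, y))` for nonempty `S ⊆ free(ρ)`. For fixed `x` this is a product of `|S|` bits of `y`,
written as signs, so `F(y) = ∑ x ∈ X, χ_S(G(x, y))` is a homogeneous polynomial of degree `|S|` on
the cube of all `y`. Density of `X` makes collisions between these monomials rare and bounds the
second moment of `F` by `2 |X|² m^(-0.9 |S|)`; Bonami's hypercontractive inequality bounds the
`2t`-th moment by the `t`-th power of `(2t - 1)^|S|` times the second moment. Since `Y` fills at
least a `4^(-t)` fraction of the cube for `t = n³`, restricting the `2t`-th moment to `Y` costs only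
a factor `4` after taking `t`-th roots. Hence the bias is at most `δ^|S|` with `δ = 1 / (2n⁴)`, and
the relative error `∑ S ≠ ∅, δ^|S| = (1 + δ)^|free(ρ)| - 1` is at most `1 / n³`.
-/

namespace PointwiseUniformity

section Hypercontractivity

lemma two_mul_natCast_sub_one_nonneg {t : ℕ} (ht : 1 ≤ t) : (0 : ℝ) ≤ 2 * t - 1 := by
  have : (1 : ℝ) ≤ t := by exact_mod_cast ht
  linarith

lemma choose_two_mul_le (t j : ℕ) :
    (2 * t).choose (2 * j) ≤ t.choose j * (2 * t - 1) ^ j := by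
  induction j with
  | zero => simp
  | succ j ih =>
    have hmid := Nat.choose_succ_right_eq (2 * t) (2 * j)
    have htop := Nat.choose_succ_right_eq (2 * t) (2 * j + 1)
    have hhalf := Nat.choose_succ_right_eq t j
    refine Nat.le_of_mul_le_mul_right ?_ (by positivity : 0 < (2 * j + 2) * (2 * j + 1))
    calc (2 * t).choose (2 * (j + 1)) * ((2 * j + 2) * (2 * j + 1))
        = (2 * t).choose (2 * j + 1 + 1) * (2 * j + 1 + 1) * (2 * j + 1) := by ring_nf
      _ = (2 * t).choose (2 * j + 1) * (2 * j + 1) * (2 * t - (2 * j + 1)) := by rw [htop]; ring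
      _ = (2 * t).choose (2 * j) * (2 * (t - j)) * (2 * t - (2 * j + 1)) := by
        rw [hmid, Nat.mul_sub 2]
      _ ≤ t.choose j * (2 * t - 1) ^ j * (2 * (t - j)) * (2 * t - 1) := by
        gcongr ?_ * _ * ?_
        omega
      _ = 2 * (t.choose j * (t - j)) * (2 * t - 1) ^ (j + 1) := by ring
      _ = t.choose (j + 1) * (2 * t - 1) ^ (j + 1) * (2 * j + 2) := by rw [← hhalf]; ring
      _ ≤ t.choose (j + 1) * (2 * t - 1) ^ (j + 1) * ((2 * j + 2) * (2 * j + 1)) := by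
        gcongr
        exact Nat.le_mul_of_pos_right _ (by positivity)

lemma sum_range_one_add_neg_one_pow_mul {R : Type*} [CommRing R] (f : ℕ → R) (t : ℕ) :
    ∑ k ∈ range (2 * t + 1), (1 + (-1) ^ k) * f k = 2 * ∑ j ∈ range (t + 1), f (2 * j) := by
  induction t with
  | zero => simp [one_add_one_eq_two]
  | succ t ih =>
    rw [show 2 * (t + 1) + 1 = 2 * t + 1 + 1 + 1 by ring, sum_range_succ, sum_range_succ, ih,
      sum_range_succ _ (t + 1), (odd_two_mul_add_one t).neg_one_pow,
      show 2 * t + 1 + 1 = 2 * (t + 1) by ring, (even_two_mul _).neg_one_pow]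
    ring

lemma add_pow_add_sub_pow_two_mul {R : Type*} [CommRing R] (a b : R) (t : ℕ) :
    (a + b) ^ (2 * t) + (a - b) ^ (2 * t) =
      2 * ∑ j ∈ range (t + 1), (b ^ 2) ^ j * (a ^ 2) ^ (t - j) * (2 * t).choose (2 * j) := by
  calc (a + b) ^ (2 * t) + (a - b) ^ (2 * t)
      = ∑ k ∈ range (2 * t + 1),
          (1 + (-1) ^ k) * (b ^ k * a ^ (2 * t - k) * (2 * t).choose k) := by
        rw [sub_eq_neg_add, add_comm a, add_pow, add_pow, ← sum_add_distrib]
        refine sum_congr rfl fun k _ => ?_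
        rw [neg_pow]
        ring
    _ = 2 * ∑ j ∈ range (t + 1), b ^ (2 * j) * a ^ (2 * t - 2 * j) * (2 * t).choose (2 * j) :=
        sum_range_one_add_neg_one_pow_mul _ t
    _ = _ := by simp only [← pow_mul, Nat.mul_sub]

lemma add_pow_add_sub_pow_two_mul_le (a b : ℝ) {t : ℕ} (ht : 1 ≤ t) :
    (a + b) ^ (2 * t) + (a - b) ^ (2 * t) ≤ 2 * (a ^ 2 + (2 * t - 1) * b ^ 2) ^ t := by
  rw [add_pow_add_sub_pow_two_mul, add_comm (a ^ 2), add_pow]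
  gcongr 2 * ?_
  refine sum_le_sum fun j _ => ?_
  have hchoose : ((2 * t).choose (2 * j) : ℝ) ≤ t.choose j * (2 * t - 1) ^ j := by
    have := choose_two_mul_le t j
    rw [← Nat.cast_le (α := ℝ)] at this
    push_cast [Nat.cast_sub (by omega : 1 ≤ 2 * t)] at this
    exact this
  calc (b ^ 2) ^ j * (a ^ 2) ^ (t - j) * (2 * t).choose (2 * j)
      ≤ (b ^ 2) ^ j * (a ^ 2) ^ (t - j) * (t.choose j * (2 * t - 1) ^ j) := by gcongr
    _ = ((2 * t - 1) * b ^ 2) ^ j * (a ^ 2) ^ (t - j) * t.choose j := by rw [mul_pow]; ring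

lemma sum_add_pow_le_of_sum_pow_le {γ : Type*} {s : Finset γ} {f g : γ → ℝ} {N a b : ℝ} {t : ℕ}
    (ht : 1 ≤ t) (hN : 0 ≤ N) (ha : 0 ≤ a) (hb : 0 ≤ b)
    (hf : ∀ i ∈ s, 0 ≤ f i) (hg : ∀ i ∈ s, 0 ≤ g i)
    (hfa : ∑ i ∈ s, f i ^ t ≤ N * a ^ t) (hgb : ∑ i ∈ s, g i ^ t ≤ N * b ^ t) :
    ∑ i ∈ s, (f i + g i) ^ t ≤ N * (a + b) ^ t := by
  have ht0 : t ≠ 0 := by omega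
  have root_le {h : γ → ℝ} {c : ℝ} (hc : 0 ≤ c) (hh : ∀ i ∈ s, 0 ≤ h i)
      (hhc : ∑ i ∈ s, h i ^ t ≤ N * c ^ t) :
      (∑ i ∈ s, h i ^ t) ^ (1 / t : ℝ) ≤ N ^ (1 / t : ℝ) * c := by
    calc (∑ i ∈ s, h i ^ t) ^ (1 / t : ℝ) ≤ (N * c ^ t) ^ (1 / t : ℝ) :=
          Real.rpow_le_rpow (sum_nonneg fun i hi => pow_nonneg (hh i hi) t) hhc (by positivity)
      _ = N ^ (1 / t : ℝ) * c := by
          rw [Real.mul_rpow hN (by positivity), one_div, Real.pow_rpow_inv_natCast hc ht0]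
  have minkowski := Real.Lp_add_le_of_nonneg s (p := t) (by exact_mod_cast ht) hf hg
  simp only [Real.rpow_natCast] at minkowski
  have hroot := minkowski.trans (add_le_add (root_le ha hf hfa) (root_le hb hg hgb))
  have hsum : 0 ≤ ∑ i ∈ s, (f i + g i) ^ t :=
    sum_nonneg fun i hi => pow_nonneg (add_nonneg (hf i hi) (hg i hi)) t
  calc ∑ i ∈ s, (f i + g i) ^ t = ((∑ i ∈ s, (f i + g i) ^ t) ^ (1 / t : ℝ)) ^ t := by
        rw [one_div, Real.rpow_inv_natCast_pow hsum ht0]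
    _ ≤ (N ^ (1 / t : ℝ) * a + N ^ (1 / t : ℝ) * b) ^ t := by gcongr
    _ = N * (a + b) ^ t := by
        rw [← mul_add, mul_pow, one_div, Real.rpow_inv_natCast_pow hN ht0]

/-- The sign `(-1) ^ b` of a bit `b`. -/
def boolSign (b : Bool) : ℝ := if b then -1 else 1

lemma boolSign_not (b : Bool) : boolSign (!b) = -boolSign b := by cases b <;> simp [boolSign]

lemma abs_boolSign (b : Bool) : |boolSign b| = 1 := by cases b <;> simp [boolSign]

variable {V : Type*}

/-- The Walsh function (character of the Boolean cube) indexed by `S`: the parity of the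
coordinates of `y` in `S`, written as a sign. -/
def walsh (S : Finset V) (y : V → Bool) : ℝ := ∏ v ∈ S, boolSign (y v)

lemma walsh_empty (y : V → Bool) : walsh ∅ y = 1 := prod_empty

lemma abs_walsh (S : Finset V) (y : V → Bool) : |walsh S y| = 1 := by
  simp [walsh, abs_prod, abs_boolSign]

variable [DecidableEq V]

lemma walsh_insert {v : V} {S : Finset V} (hv : v ∉ S) (y : V → Bool) :
    walsh (insert v S) y = boolSign (y v) * walsh S y :=
  prod_insert hv

/-- The involution of the Boolean cube that flips the coordinate `v`, used to average over one
variable at a time. -/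
def flipEquiv (v : V) : (V → Bool) ≃ (V → Bool) where
  toFun y := Function.update y v (!y v)
  invFun y := Function.update y v (!y v)
  left_inv y := by simp
  right_inv y := by simp

lemma flipEquiv_self (v : V) (y : V → Bool) : flipEquiv v y v = !y v := by
  simp [flipEquiv]

lemma walsh_flipEquiv {v : V} {S : Finset V} (hv : v ∉ S) (y : V → Bool) :
    walsh S (flipEquiv v y) = walsh S y :=
  prod_congr rfl fun w hw => by
    simp [flipEquiv, Function.update_of_ne (ne_of_mem_of_not_mem hw hv)]

variable [Fintype V]

lemma sum_add_boolSign_mul_pow_le {A B : (V → Bool) → ℝ} {v : V} {t : ℕ} (ht : 1 ≤ t)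
    (hA : ∀ y, A (flipEquiv v y) = A y) (hB : ∀ y, B (flipEquiv v y) = B y) :
    ∑ y, (A y + boolSign (y v) * B y) ^ (2 * t) ≤
      ∑ y, (A y ^ 2 + (2 * t - 1) * B y ^ 2) ^ t := by
  have hflip : ∑ y, (A y + boolSign (y v) * B y) ^ (2 * t) =
      ∑ y, (A y - boolSign (y v) * B y) ^ (2 * t) := by
    rw [← (flipEquiv v).sum_comp]
    simp only [hA, hB, flipEquiv_self, boolSign_not, neg_mul, ← sub_eq_add_neg]
  have htwo : 2 * ∑ y, (A y + boolSign (y v) * B y) ^ (2 * t) ≤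
      2 * ∑ y, (A y ^ 2 + (2 * t - 1) * B y ^ 2) ^ t := by
    rw [two_mul]
    nth_rw 2 [hflip]
    rw [← sum_add_distrib, mul_sum]
    refine sum_le_sum fun y _ => ?_
    have hsq : (boolSign (y v) * B y) ^ 2 = B y ^ 2 := by
      rw [mul_pow, ← sq_abs (boolSign _), abs_boolSign, one_pow, one_mul]
    simpa only [hsq] using
      add_pow_add_sub_pow_two_mul_le (A y) (boolSign (y v) * B y) ht
  linarith

-- Split off the variable `v` as `A + boolSign (y v) * B` with `A`, `B` free of `v`: averaging over
-- `v` is the two-point inequality, and Minkowski in `L^t` adds the bounds for `A ^ 2` and `B ^ 2`.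
theorem bonami_inequality (W : Finset V) (c : Finset V → ℝ) {t : ℕ} (ht : 1 ≤ t) :
    ∑ y : V → Bool, (∑ U ∈ W.powerset, c U * walsh U y) ^ (2 * t) ≤
      2 ^ Fintype.card V * (∑ U ∈ W.powerset, (2 * t - 1) ^ #U * c U ^ 2) ^ t := by
  induction W using Finset.induction_on generalizing c with
  | empty => simp [walsh_empty, pow_mul]
  | insert v W hv ih =>
    have notMem {U : Finset V} (hU : U ∈ W.powerset) : v ∉ U :=
      fun h => hv (mem_powerset.1 hU h)
    have ht' := two_mul_natCast_sub_one_nonneg ht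
    have hinv (d : Finset V → ℝ) (y : V → Bool) :
        ∑ U ∈ W.powerset, d U * walsh U (flipEquiv v y) = ∑ U ∈ W.powerset, d U * walsh U y :=
      sum_congr rfl fun U hU => by rw [walsh_flipEquiv (notMem hU)]
    have hsplit (y : V → Bool) : ∑ U ∈ (insert v W).powerset, c U * walsh U y =
        ∑ U ∈ W.powerset, c U * walsh U y +
          boolSign (y v) * ∑ U ∈ W.powerset, c (insert v U) * walsh U y := by
      rw [sum_powerset_insert hv, mul_sum]
      congr 1
      exact sum_congr rfl fun U hU => by rw [walsh_insert (notMem hU)]; ring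
    have hweight : ∑ U ∈ W.powerset, (2 * t - 1 : ℝ) ^ #(insert v U) * c (insert v U) ^ 2 =
        (2 * t - 1) * ∑ U ∈ W.powerset, (2 * t - 1 : ℝ) ^ #U * c (insert v U) ^ 2 := by
      rw [mul_sum]
      exact sum_congr rfl fun U hU => by rw [card_insert_of_notMem (notMem hU)]; ring
    simp only [hsplit]
    rw [sum_powerset_insert hv, hweight]
    refine (sum_add_boolSign_mul_pow_le ht (hinv c) (hinv fun U => c (insert v U))).trans
      (sum_add_pow_le_of_sum_pow_le ht (by positivity) (by positivity) (by positivity)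
        (fun _ _ => by positivity) (fun _ _ => by positivity) ?_ ?_)
    · simpa only [← pow_mul] using ih c
    · simp only [mul_pow (2 * (t : ℝ) - 1), ← mul_sum, ← pow_mul]
      rw [mul_left_comm]
      gcongr
      exact ih fun U => c (insert v U)

lemma sum_sum_walsh_pow_le {γ : Type*} (A : Finset γ) (U : γ → Finset V) {t : ℕ} (ht : 1 ≤ t) :
    ∑ y : V → Bool, (∑ a ∈ A, walsh (U a) y) ^ (2 * t) ≤
      2 ^ Fintype.card V *
        (∑ a ∈ A, (2 * t - 1) ^ #(U a) * (#{a' ∈ A | U a' = U a} : ℝ)) ^ t := by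
  have hlhs (y : V → Bool) : ∑ W ∈ (univ : Finset V).powerset,
      (#{a ∈ A | U a = W} : ℝ) * walsh W y = ∑ a ∈ A, walsh (U a) y := by
    rw [powerset_univ, ← sum_fiberwise' A U fun W => walsh W y]
    simp
  have hrhs : ∑ W ∈ (univ : Finset V).powerset,
      (2 * t - 1 : ℝ) ^ #W * (#{a ∈ A | U a = W} : ℝ) ^ 2 =
        ∑ a ∈ A, (2 * t - 1) ^ #(U a) * (#{a' ∈ A | U a' = U a} : ℝ) := by
    rw [powerset_univ,
      ← sum_fiberwise' A U fun W => (2 * t - 1 : ℝ) ^ #W * (#{a' ∈ A | U a' = W} : ℝ)]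
    refine sum_congr rfl fun W _ => ?_
    rw [sum_const, nsmul_eq_mul]
    ring
  simpa only [hlhs, hrhs] using bonami_inequality univ (fun W => (#{a ∈ A | U a = W} : ℝ)) ht

end Hypercontractivity

lemma sq_sum_le_of_sum_pow_le {Ω : Type*} [Fintype Ω] (Y : Finset Ω) {F : Ω → ℝ} {M r : ℝ}
    {t : ℕ} (ht : 1 ≤ t) (hM : 0 ≤ M) (hr : 0 ≤ r)
    (hF : ∑ y, F y ^ (2 * t) ≤ Fintype.card Ω * M ^ t)
    (hY : (Fintype.card Ω : ℝ) ≤ #Y * r ^ t) :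
    (∑ y ∈ Y, F y) ^ 2 ≤ r * M * (#Y : ℝ) ^ 2 := by
  obtain ⟨s, rfl⟩ : ∃ s, t = s + 1 := ⟨t - 1, by omega⟩
  refine le_of_pow_le_pow_left₀ s.succ_ne_zero (by positivity) ?_
  calc ((∑ y ∈ Y, F y) ^ 2) ^ (s + 1)
      ≤ (#Y * ∑ y ∈ Y, F y ^ 2) ^ (s + 1) := by gcongr; exact sq_sum_le_card_mul_sum_sq
    _ = #Y ^ (s + 1) * (∑ y ∈ Y, F y ^ 2) ^ (s + 1) := mul_pow ..
    _ ≤ #Y ^ (s + 1) * (#Y ^ s * ∑ y ∈ Y, (F y ^ 2) ^ (s + 1)) := by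
        gcongr
        exact pow_sum_le_card_mul_sum_pow (fun _ _ => sq_nonneg _) s
    _ ≤ #Y ^ (s + 1) * (#Y ^ s * ∑ y, F y ^ (2 * (s + 1))) := by
        simp only [← pow_mul]
        gcongr
        · exact fun y _ _ => (even_two_mul _).pow_nonneg _
        · exact subset_univ Y
    _ ≤ #Y ^ (s + 1) * (#Y ^ s * (#Y * r ^ (s + 1) * M ^ (s + 1))) := by
        gcongr
        exact hF.trans (by gcongr)
    _ = (r * M * (#Y : ℝ) ^ 2) ^ (s + 1) := by ring

section FourierInversion

lemma sum_powerset_erase_empty_pow_card {ι : Type*} [DecidableEq ι] (J : Finset ι) (δ : ℝ) :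
    ∑ S ∈ J.powerset.erase ∅, δ ^ #S = (1 + δ) ^ #J - 1 := by
  have h := add_sum_erase J.powerset (fun S => δ ^ #S) (empty_mem_powerset J)
  have hprod := prod_one_add (f := fun _ : ι => δ) J
  simp only [prod_const] at hprod
  simp only [card_empty, pow_zero, ← hprod] at h
  linarith

variable {ι : Type*} [Fintype ι] {J : Finset ι}

lemma one_add_boolSign_mul_boolSign (b c : Bool) :
    1 + boolSign b * boolSign c = if b = c then 2 else 0 := by
  cases b <;> cases c <;> norm_num [boolSign]

lemma sum_powerset_walsh_mul_walsh {z w : ι → Bool} (hJ : ∀ i ∉ J, w i = z i) :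
    ∑ S ∈ J.powerset, walsh S z * walsh S w = if w = z then 2 ^ #J else 0 := by
  simp only [walsh, ← prod_mul_distrib]
  rw [← prod_one_add]
  simp only [one_add_boolSign_mul_boolSign]
  split_ifs with h
  · simp [h]
  · obtain ⟨i, hi⟩ := Function.ne_iff.1 h
    have hiJ : i ∈ J := by_contra fun hiJ => hi (hJ i hiJ)
    exact prod_eq_zero hiJ (if_neg (Ne.symm hi))

theorem abs_card_sub_card_div_two_pow_le {γ : Type*} {A : Finset γ}
    {w : γ → ι → Bool} {z : ι → Bool} {δ : ℝ} (hJ : ∀ a ∈ A, ∀ i ∉ J, w a i = z i)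
    (hbias : ∀ S ⊆ J, S.Nonempty → |∑ a ∈ A, walsh S (w a)| ≤ δ ^ #S * #A) :
    |(#{a ∈ A | w a = z} : ℝ) - #A / 2 ^ #J| ≤ ((1 + δ) ^ #J - 1) * (#A / 2 ^ #J) := by
  classical
  have hcount : 2 ^ #J * (#{a ∈ A | w a = z} : ℝ) =
      ∑ S ∈ J.powerset, walsh S z * ∑ a ∈ A, walsh S (w a) := by
    simp only [mul_sum]
    rw [sum_comm, sum_congr rfl fun a ha => sum_powerset_walsh_mul_walsh (hJ a ha),
      ← sum_filter, sum_const, nsmul_eq_mul, mul_comm]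
  have herror : (#{a ∈ A | w a = z} : ℝ) - #A / 2 ^ #J =
      (∑ S ∈ J.powerset.erase ∅, walsh S z * ∑ a ∈ A, walsh S (w a)) / 2 ^ #J := by
    rw [← add_sum_erase _ _ (empty_mem_powerset J)] at hcount
    simp only [walsh_empty, one_mul, sum_const, nsmul_eq_mul, mul_one] at hcount
    field_simp
    linarith
  rw [herror, abs_div, abs_of_pos (by positivity : (0 : ℝ) < 2 ^ #J), ← mul_div_assoc]
  gcongr
  calc |∑ S ∈ J.powerset.erase ∅, walsh S z * ∑ a ∈ A, walsh S (w a)|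
      ≤ ∑ S ∈ J.powerset.erase ∅, |walsh S z * ∑ a ∈ A, walsh S (w a)| :=
        abs_sum_le_sum_abs _ _
    _ ≤ ∑ S ∈ J.powerset.erase ∅, δ ^ #S * #A := sum_le_sum fun S hS => by
        rw [abs_mul, abs_walsh, one_mul]
        exact hbias S (mem_powerset.1 (mem_of_mem_erase hS))
          (nonempty_iff_ne_empty.2 (ne_of_mem_erase hS))
    _ = ((1 + δ) ^ #J - 1) * #A := by rw [← sum_mul, sum_powerset_erase_empty_pow_card]

end FourierInversion

section IndexGadget

variable {ι β : Type*}

/-- The map `G(x, y)` applying the index gadget `(x, y) ↦ y_x` in every coordinate. -/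
def indexGadget (x : ι → β) (y : ι → β → Bool) : ι → Bool := fun i => y i (x i)

variable [DecidableEq ι] [DecidableEq β]

/-- The graph of `x` over `S`: the set of bits of `y`, viewed as a point of the cube on `ι × β`,
that `indexGadget x y` reads in the coordinates from `S`. -/
def graphOver (S : Finset ι) (x : ι → β) : Finset (ι × β) := S.image fun i => (i, x i)

lemma card_graphOver (S : Finset ι) (x : ι → β) : #(graphOver S x) = #S :=
  card_image_of_injective S fun _ _ h => congrArg Prod.fst h

lemma graphOver_eq_graphOver_iff {S : Finset ι} {x x' : ι → β} :
    graphOver S x = graphOver S x' ↔ ∀ i ∈ S, x i = x' i := by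
  refine ⟨fun h i hi => ?_, fun h => image_congr fun i hi => by rw [h i hi]⟩
  have hmem : (i, x i) ∈ graphOver S x' := h ▸ mem_image_of_mem _ hi
  obtain ⟨_, -, heq⟩ := mem_image.1 hmem
  grind

lemma walsh_graphOver (S : Finset ι) (x : ι → β) (y : ι × β → Bool) :
    walsh (graphOver S x) y = walsh S (indexGadget x (Function.curry y)) :=
  prod_image fun _ _ _ _ h => congrArg Prod.fst h

variable [Fintype ι] [Fintype β] {X : Finset (ι → β)} {S : Finset ι} {t : ℕ}

lemma sum_sum_walsh_indexGadget_pow_le {K : ℝ} (ht : 1 ≤ t)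
    (hX : ∀ x ∈ X, #{x' ∈ X | ∀ i ∈ S, x' i = x i} ≤ K) :
    ∑ y : ι → β → Bool, (∑ x ∈ X, walsh S (indexGadget x y)) ^ (2 * t) ≤
      Fintype.card (ι → β → Bool) * ((2 * t - 1) ^ #S * (#X * K)) ^ t := by
  have ht' := two_mul_natCast_sub_one_nonneg ht
  have hcard : (Fintype.card (ι → β → Bool) : ℝ) = 2 ^ Fintype.card (ι × β) := by
    rw [← Fintype.card_congr (Equiv.curry ι β Bool)]
    simp
  rw [← (Equiv.curry ι β Bool).sum_comp, hcard]
  simp only [Equiv.curry_apply, ← walsh_graphOver]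
  refine (sum_sum_walsh_pow_le X (graphOver S) ht).trans ?_
  gcongr
  simp only [card_graphOver, graphOver_eq_graphOver_iff, ← mul_sum]
  gcongr
  simpa only [sum_const, nsmul_eq_mul] using sum_le_sum hX

theorem abs_sum_walsh_indexGadget_le {Y : Finset (ι → β → Bool)} {q δ : ℝ} (ht : 1 ≤ t)
    (hq : 0 ≤ q) (hδ : 0 ≤ δ) (hqδ : 16 * t * q ≤ δ ^ 2) (hS : S.Nonempty)
    (hX : ∀ α : ι → β, #{x ∈ X | ∀ i ∈ S, x i = α i} ≤ 2 * #X * q ^ #S)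
    (hY : (Fintype.card (ι → β → Bool) : ℝ) ≤ #Y * 4 ^ t) :
    |∑ p ∈ X ×ˢ Y, walsh S (indexGadget p.1 p.2)| ≤ δ ^ #S * #(X ×ˢ Y) := by
  have ht' := two_mul_natCast_sub_one_nonneg ht
  have hsq := sq_sum_le_of_sum_pow_le Y ht (by positivity) (by norm_num)
    (sum_sum_walsh_indexGadget_pow_le ht fun x _ => hX x) hY
  have hcoeff : 8 * ((2 * t - 1) * q) ^ #S ≤ (δ ^ #S) ^ 2 := by
    calc 8 * ((2 * t - 1) * q) ^ #S ≤ 8 ^ #S * (2 * t * q) ^ #S := by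
          gcongr
          · exact le_self_pow₀ (by norm_num) hS.card_ne_zero
          · linarith
      _ = (16 * t * q) ^ #S := by rw [← mul_pow]; ring
      _ ≤ (δ ^ 2) ^ #S := by gcongr
      _ = (δ ^ #S) ^ 2 := pow_right_comm ..
  rw [sum_product_right]
  refine abs_le_of_sq_le_sq ?_ (by positivity)
  calc (∑ y ∈ Y, ∑ x ∈ X, walsh S (indexGadget x y)) ^ 2
      ≤ 4 * ((2 * t - 1) ^ #S * (#X * (2 * #X * q ^ #S))) * (#Y : ℝ) ^ 2 := hsq
    _ = 8 * ((2 * t - 1) * q) ^ #S * (#X * #Y) ^ 2 := by rw [mul_pow]; ring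
    _ ≤ (δ ^ #S) ^ 2 * (#X * #Y) ^ 2 := by gcongr
    _ = (δ ^ #S * #(X ×ˢ Y)) ^ 2 := by rw [card_product]; push_cast; ring

theorem abs_card_indexGadget_eq_sub_le {Y : Finset (ι → β → Bool)} {J : Finset ι}
    {z : ι → Bool} {q δ : ℝ} (ht : 1 ≤ t)
    (hq : 0 ≤ q) (hδ : 0 ≤ δ) (hqδ : 16 * t * q ≤ δ ^ 2)
    (hX : ∀ S ⊆ J, S.Nonempty → ∀ α : ι → β,
      #{x ∈ X | ∀ i ∈ S, x i = α i} ≤ 2 * #X * q ^ #S)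
    (hY : (Fintype.card (ι → β → Bool) : ℝ) ≤ #Y * 4 ^ t)
    (hJ : ∀ x ∈ X, ∀ y ∈ Y, ∀ i ∉ J, y i (x i) = z i) :
    |(#{p ∈ X ×ˢ Y | indexGadget p.1 p.2 = z} : ℝ) - #(X ×ˢ Y) / 2 ^ #J| ≤
      ((1 + δ) ^ #J - 1) * (#(X ×ˢ Y) / 2 ^ #J) :=
  abs_card_sub_card_div_two_pow_le
    (fun p hp => hJ p.1 (mem_product.1 hp).1 p.2 (mem_product.1 hp).2)
    fun S hSJ hS => abs_sum_walsh_indexGadget_le ht hq hδ hqδ hS (hX S hSJ hS) hY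

end IndexGadget

section Parameters

variable {n m : ℕ}

lemma one_add_one_div_pow_sub_one_le {k : ℕ} (hn : 1 ≤ n) (hk : k ≤ n) :
    (1 + 1 / (2 * (n : ℝ) ^ 4)) ^ k - 1 ≤ 1 / (n : ℝ) ^ 3 := by
  have hn1 : (1 : ℝ) ≤ n := by exact_mod_cast hn
  have : (0 : ℝ) < n := by linarith
  set ε : ℝ := 1 / (2 * (n : ℝ) ^ 3) with hε
  have hε0 : 0 ≤ ε := by positivity
  have hε1 : ε ≤ 1 := by
    rw [hε, div_le_one (by positivity)]
    linarith [one_le_pow₀ hn1 (n := 3)]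
  have hexp : (1 + 1 / (2 * (n : ℝ) ^ 4)) ^ k ≤ Real.exp ε := by
    calc (1 + 1 / (2 * (n : ℝ) ^ 4)) ^ k ≤ (1 + 1 / (2 * (n : ℝ) ^ 4)) ^ n :=
          pow_le_pow_right₀ (le_add_of_nonneg_right (by positivity)) hk
      _ ≤ Real.exp (1 / (2 * (n : ℝ) ^ 4)) ^ n := by
          gcongr
          rw [add_comm]
          exact Real.add_one_le_exp _
      _ = Real.exp ε := by
          rw [← Real.exp_nat_mul, hε]
          congr 1
          field_simp
  have hsub : Real.exp ε - 1 ≤ 2 * ε := by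
    have := Real.abs_exp_sub_one_le ((abs_of_nonneg hε0).trans_le hε1)
    rw [abs_of_nonneg hε0] at this
    exact (le_abs_self _).trans this
  calc (1 + 1 / (2 * (n : ℝ) ^ 4)) ^ k - 1 ≤ 2 * ε := by linarith
    _ = 1 / (n : ℝ) ^ 3 := by rw [hε]; field_simp

lemma sixteen_mul_pow_three_mul_rpow_neg_le (hn : 2 ≤ n) (hm : n ^ 20 ≤ m) :
    16 * (n ^ 3 : ℕ) * (m : ℝ) ^ (-0.9 : ℝ) ≤ (1 / (2 * (n : ℝ) ^ 4)) ^ 2 := by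
  have hn2 : (2 : ℝ) ≤ n := by exact_mod_cast hn
  have hn0 : (0 : ℝ) < n := by linarith
  have hrpow : (m : ℝ) ^ (-0.9 : ℝ) ≤ ((n : ℝ) ^ 18)⁻¹ := by
    calc (m : ℝ) ^ (-0.9 : ℝ) ≤ ((n : ℝ) ^ 20) ^ (-0.9 : ℝ) :=
          Real.rpow_le_rpow_of_nonpos (by positivity) (by exact_mod_cast hm) (by norm_num)
      _ = ((n : ℝ) ^ 18)⁻¹ := by
          rw [← Real.rpow_natCast, ← Real.rpow_mul hn0.le, ← Real.rpow_natCast,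
            ← Real.rpow_neg hn0.le]
          norm_num
  have h64 : (64 : ℝ) ≤ n ^ 7 := by
    calc (64 : ℝ) ≤ 2 ^ 7 := by norm_num
      _ ≤ n ^ 7 := by gcongr
  calc 16 * (n ^ 3 : ℕ) * (m : ℝ) ^ (-0.9 : ℝ) ≤ 16 * (n : ℝ) ^ 3 * ((n : ℝ) ^ 18)⁻¹ := by
        push_cast
        gcongr
    _ = 64 / n ^ 7 * (1 / (2 * (n : ℝ) ^ 4)) ^ 2 := by field_simp; norm_num
    _ ≤ (1 / (2 * (n : ℝ) ^ 4)) ^ 2 :=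
        mul_le_of_le_one_left (by positivity) ((div_le_one (by positivity)).2 h64)

lemma card_le_card_mul_four_pow {Y : Finset (Fin n → Fin m → Bool)} (hn : 1 ≤ n)
    (hY : Y.Nonempty) (hdef : (n : ℝ) * m - Real.logb 2 #Y ≤ (n : ℝ) ^ 3 + 1) :
    (Fintype.card (Fin n → Fin m → Bool) : ℝ) ≤ #Y * 4 ^ n ^ 3 := by
  have hn3 : (1 : ℝ) ≤ (n : ℝ) ^ 3 := one_le_pow₀ (by exact_mod_cast hn)
  have hY0 : (0 : ℝ) < #Y := by exact_mod_cast hY.card_pos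
  calc (Fintype.card (Fin n → Fin m → Bool) : ℝ) = (2 : ℝ) ^ ((n : ℝ) * m) := by
        rw [mul_comm, Real.rpow_mul (by norm_num)]
        simp
    _ ≤ (2 : ℝ) ^ (Real.logb 2 #Y + 2 * (n : ℝ) ^ 3) :=
        Real.rpow_le_rpow_of_exponent_le (by norm_num) (by linarith)
    _ = #Y * 4 ^ n ^ 3 := by
        rw [Real.rpow_add (by norm_num), Real.rpow_logb (by norm_num) (by norm_num) hY0,
          Real.rpow_mul (by norm_num), ← Nat.cast_pow, Real.rpow_natCast]
        norm_num

end Parameters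

end PointwiseUniformity

open PointwiseUniformity

theorem pointwise_uniformity_general {n m : ℕ} (hn : 2 ≤ n) (hm : n ^ 20 ≤ m)
    (ρ : Fin n → Option Bool) (X : Finset (Fin n → Fin m)) (Y : Finset (Fin n → Fin m → Bool))
    (hY : Y.Nonempty)
    (hdense : ∀ I : Finset (Fin n), (∀ i ∈ I, ρ i = none) → I.Nonempty → ∀ α : Fin n → Fin m,
      (#{x ∈ X | ∀ i ∈ I, x i = α i} : ℝ) ≤ 2 * #X * (m : ℝ) ^ (-(0.9 * (#I : ℝ))))
    (hcons : ∀ x ∈ X, ∀ y ∈ Y, ∀ i b, ρ i = some b → y i (x i) = b)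
    (hdef : (n : ℝ) * m - Real.logb 2 #Y ≤ (n : ℝ) ^ 3 + 1)
    (z : Fin n → Bool) (hz : ∀ i b, ρ i = some b → z i = b) :
    (1 - 1 / (n : ℝ) ^ 3) * (2 : ℝ) ^ (-(#{i | ρ i = none} : ℝ)) * #X * #Y ≤
        #{p ∈ X ×ˢ Y | ∀ i, p.2 i (p.1 i) = z i} ∧
      #{p ∈ X ×ˢ Y | ∀ i, p.2 i (p.1 i) = z i} ≤
        (1 + 1 / (n : ℝ) ^ 3) * (2 : ℝ) ^ (-(#{i | ρ i = none} : ℝ)) * #X * #Y := by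
  set J : Finset (Fin n) := {i | ρ i = none}
  have hfree {i : Fin n} : i ∈ J ↔ ρ i = none := by simp [J]
  have hfixed : ∀ x ∈ X, ∀ y ∈ Y, ∀ i ∉ J, y i (x i) = z i := fun x hx y hy i hi => by
    obtain ⟨b, hb⟩ := Option.ne_none_iff_exists'.1 (hfree.not.1 hi)
    rw [hcons x hx y hy i b hb, hz i b hb]
  have hpreimage : ({p ∈ X ×ˢ Y | ∀ i, p.2 i (p.1 i) = z i} : Finset _) =
      {p ∈ X ×ˢ Y | indexGadget p.1 p.2 = z} :=
    filter_congr fun _ _ => funext_iff.symm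
  have hmain : |(#{p ∈ X ×ˢ Y | indexGadget p.1 p.2 = z} : ℝ) - #(X ×ˢ Y) / 2 ^ #J| ≤
      ((1 + 1 / (2 * (n : ℝ) ^ 4)) ^ #J - 1) * (#(X ×ˢ Y) / 2 ^ #J) := by
    refine abs_card_indexGadget_eq_sub_le (Nat.one_le_pow 3 n (by omega))
      (by positivity) (by positivity) (sixteen_mul_pow_three_mul_rpow_neg_le hn hm) ?_
      (card_le_card_mul_four_pow (by omega) hY hdef) hfixed
    intro S hSJ hS α
    rw [← Real.rpow_mul_natCast m.cast_nonneg, neg_mul]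
    convert hdense S (fun i hi => hfree.1 (hSJ hi)) hS α
  have htail := one_add_one_div_pow_sub_one_le (by omega : 1 ≤ n) (card_finset_fin_le J)
  obtain ⟨hlower, hupper⟩ :=
    abs_le.1 (hmain.trans (mul_le_mul_of_nonneg_right htail (by positivity)))
  have hscale (r : ℝ) : r * (2 : ℝ) ^ (-#J : ℝ) * #X * #Y = r * (#(X ×ˢ Y) / 2 ^ #J) := by
    rw [Real.rpow_neg (by norm_num), Real.rpow_natCast, card_product]
    push_cast
    ring
  rw [hpreimage, hscale, hscale]
  constructor <;> linarith

/-- **Pointwise uniformity lemma.** For `ρ ∈ {0,1,*}^n` (encoded as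
`ρ : Fin n → Option Bool`) and a `ρ`-essentially-structured rectangle `X × Y` with
`nm − log₂|Y| ≤ n³ + 1`: for every `z` consistent with `ρ`,
`(1 − 1/n³)·2^(−|free(ρ)|)·|X|·|Y| ≤ |G⁻¹(z) ∩ (X × Y)| ≤ (1 + 1/n³)·2^(−|free(ρ)|)·|X|·|Y|`;
i.e. the distribution of `G(x,y)` for uniform `(x,y) ∈ X × Y` is `1/n³`-pointwise-close
to uniform on the set of `z` consistent with `ρ`. -/
theorem pointwise_uniformity :
    ∃ N : ℕ, ∀ n : ℕ, N ≤ n →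
    ∀ (ρ : Fin n → Option Bool)
      (X : Finset (Fin n → Fin (n ^ 256))) (Y : Finset (Fin n → Fin (n ^ 256) → Bool)),
      X.Nonempty → Y.Nonempty →
      -- all elements of X agree on the fixed positions of ρ
      (∀ x ∈ X, ∀ x' ∈ X, ∀ i : Fin n, ρ i ≠ none → x i = x' i) →
      -- the projection of X to free(ρ) is 0.9-essentially-dense
      (∀ I : Finset (Fin n), (∀ i ∈ I, ρ i = none) → I.Nonempty →
        ∀ α : Fin n → Fin (n ^ 256),
        ((X.filter fun x => ∀ i ∈ I, x i = α i).card : ℝ) ≤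
          2 * (X.card : ℝ) * ((n ^ 256 : ℕ) : ℝ) ^ (-(0.9 * (I.card : ℝ)))) →
      -- every output G(x,y) on X × Y is consistent with ρ
      (∀ x ∈ X, ∀ y ∈ Y, ∀ i : Fin n, ∀ b : Bool, ρ i = some b → y i (x i) = b) →
      -- deficiency of Y at most n³ + 1
      ((n : ℝ) * ((n ^ 256 : ℕ) : ℝ) - Real.logb 2 (Y.card : ℝ) ≤ (n : ℝ) ^ 3 + 1) →
      ∀ z : Fin n → Bool,
        (∀ i : Fin n, ∀ b : Bool, ρ i = some b → z i = b) →
        ((1 - 1 / (n : ℝ) ^ 3) *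
            (2 : ℝ) ^ (-(((Finset.univ.filter fun i => ρ i = none).card : ℝ))) *
            (X.card : ℝ) * (Y.card : ℝ) ≤
          (((X ×ˢ Y).filter fun p => ∀ i, p.2 i (p.1 i) = z i).card : ℝ)) ∧
        ((((X ×ˢ Y).filter fun p => ∀ i, p.2 i (p.1 i) = z i).card : ℝ) ≤
          (1 + 1 / (n : ℝ) ^ 3) *
            (2 : ℝ) ^ (-(((Finset.univ.filter fun i => ρ i = none).card : ℝ))) *
            (X.card : ℝ) * (Y.card : ℝ)) := by
  exact ⟨2, fun n hn ρ X Y _ hY _ hdense hcons hdef => pointwise_uniformity_general hn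
    (Nat.pow_le_pow_right (by omega) (by norm_num)) ρ X Y hY hdense hcons hdef⟩
end
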